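/- arXiv:0707.0425 — 2 statements merged into one kernel-verified Lean document; each statement's English description precedes it below -/
import Mathlib

section
/- Every continuous potential V on a compact domain D ⊆ ℂ of positive Lebesgue measure admits a unique equilibrium measure: a Borel probability measure μ₀ without point masses minimizing I_V(μ) = ∫V dμ + ∬_{z≠ζ} log|z−ζ|^{-1} dμ(ζ)dμ(z) over all Borel probability measures on D without atoms. -/
open MeasureTheory

/-- The (extended-real-valued) logarithmic energy `∬_{z≠ζ} log|z−ζ|⁻¹ dμ(ζ)dμ(z)` of a
measure on `ℂ`, defined as the difference of the lintegrals of the positive and negative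
parts of the kernel. -/
noncomputable def logEnergy (μ : Measure ℂ) : EReal :=
  ((∫⁻ p in {q : ℂ × ℂ | q.1 ≠ q.2},
      ENNReal.ofReal (Real.log ‖p.1 - p.2‖⁻¹) ∂(μ.prod μ)) : EReal) -
  ((∫⁻ p in {q : ℂ × ℂ | q.1 ≠ q.2},
      ENNReal.ofReal (-Real.log ‖p.1 - p.2‖⁻¹) ∂(μ.prod μ)) : EReal)

/-- The weighted logarithmic energy functional
`I_V(μ) = ∫ V dμ + ∬_{z≠ζ} log|z−ζ|⁻¹ dμ(ζ)dμ(z)`. -/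
noncomputable def weightedEnergy (V : ℂ → ℝ) (μ : Measure ℂ) : EReal :=
  ((∫ z, V z ∂μ : ℝ) : EReal) + logEnergy μ


open scoped RealInnerProductSpace ComplexConjugate in
lemma gauss_fourier (t : ℝ) (ht : 0 < t) (μ ν : Measure ℂ) [IsProbabilityMeasure μ]
    [IsProbabilityMeasure ν] :
    ((∫ p, Real.exp (-t * ‖p.1 - p.2‖ ^ 2) ∂(μ.prod ν) : ℝ) : ℂ) =
      (4 * Real.pi * t : ℂ)⁻¹ * ∫ v : ℂ, (Real.exp (-(1 / (4 * t)) * ‖v‖ ^ 2) : ℂ) *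
        (charFun μ v * conj (charFun ν v)) := by
  have hb : 0 < 1 / (4 * t) := by positivity
  have hpi : (Real.pi : ℂ) ≠ 0 := by exact_mod_cast Real.pi_ne_zero
  have htc : (t : ℂ) ≠ 0 := by exact_mod_cast ht.ne'
  have key : ∀ w : ℂ, ((Real.exp (-t * ‖w‖ ^ 2) : ℝ) : ℂ) = (4 * Real.pi * t : ℂ)⁻¹ *
      ∫ v : ℂ, (Real.exp (-(1 / (4 * t)) * ‖v‖ ^ 2) : ℂ) * Complex.exp (⟪w, v⟫ * Complex.I) := by
    intro w
    have h := GaussianFourier.integral_cexp_neg_mul_sq_norm_add (V := ℂ)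
      (b := ((1 / (4 * t) : ℝ) : ℂ)) (by simpa using hb) Complex.I w
    have h2 : ((Module.finrank ℝ ℂ : ℂ) / 2) = 1 := by simp [Complex.finrank_real_complex]
    rw [h2, Complex.cpow_one] at h
    have h3 : ∀ v : ℂ, (Real.exp (-(1 / (4 * t)) * ‖v‖ ^ 2) : ℂ) *
        Complex.exp (⟪w, v⟫ * Complex.I) =
        Complex.exp (-((1 / (4 * t) : ℝ) : ℂ) * ‖v‖ ^ 2 + Complex.I * ⟪w, v⟫) := by
      intro v
      rw [Complex.exp_add]
      push_cast
      congr 2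
      ring
    simp_rw [h3]
    rw [h]
    push_cast
    rw [Complex.I_sq]
    have h4 : (-1 * (‖w‖ : ℂ) ^ 2 / (4 * (1 / (4 * t)))) = -t * ‖w‖ ^ 2 := by
      field_simp
    rw [h4]
    field_simp
  have hint : Integrable (fun v : ℂ => (Real.exp (-(1 / (4 * t)) * ‖v‖ ^ 2) : ℂ)) := by
    have := GaussianFourier.integrable_cexp_neg_mul_sq_norm_add (V := ℂ)
      (b := ((1 / (4 * t) : ℝ) : ℂ)) (by simpa using hb) 0 (0 : ℂ)
    refine this.congr (Filter.Eventually.of_forall fun v => ?_)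
    simp
  rw [← integral_complex_ofReal]
  simp_rw [key]
  rw [integral_const_mul]
  congr 1
  rw [integral_integral_swap]
  · congr 1
    ext v
    rw [integral_const_mul]
    congr 1
    rw [← charFun_neg, charFun_apply, charFun_apply, ← integral_prod_mul]
    congr 1
    ext p
    rw [← Complex.exp_add]
    congr 1
    rw [inner_sub_left, inner_neg_right]
    push_cast
    ring
  · have h1 : Integrable (fun q : (ℂ × ℂ) × ℂ =>
        (Real.exp (-(1 / (4 * t)) * ‖q.2‖ ^ 2) : ℂ)) ((μ.prod ν).prod volume) :=
      hint.comp_snd (μ.prod ν)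
    refine h1.mul_bdd (c := 1) ?_ ?_
    · apply Continuous.aestronglyMeasurable
      fun_prop
    · refine Filter.Eventually.of_forall fun q => ?_
      rw [Complex.norm_exp_ofReal_mul_I]

open scoped ComplexConjugate in
lemma gauss_strict (t : ℝ) (ht : 0 < t) (μ ν : Measure ℂ) [IsProbabilityMeasure μ]
    [IsProbabilityMeasure ν] (hne : μ ≠ ν) :
    (∫ p, Real.exp (-t * ‖p.1 - p.2‖ ^ 2) ∂(μ.prod ν)) +
    (∫ p, Real.exp (-t * ‖p.1 - p.2‖ ^ 2) ∂(ν.prod μ)) <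
    (∫ p, Real.exp (-t * ‖p.1 - p.2‖ ^ 2) ∂(μ.prod μ)) +
    (∫ p, Real.exp (-t * ‖p.1 - p.2‖ ^ 2) ∂(ν.prod ν)) := by
  have hb : 0 < 1 / (4 * t) := by positivity
  have hcμ : Continuous (charFun μ) := continuous_charFun
  have hcν : Continuous (charFun ν) := continuous_charFun
  have hint : Integrable (fun v : ℂ => (Real.exp (-(1 / (4 * t)) * ‖v‖ ^ 2) : ℂ)) := by
    have := GaussianFourier.integrable_cexp_neg_mul_sq_norm_add (V := ℂ)
      (b := ((1 / (4 * t) : ℝ) : ℂ)) (by simpa using hb) 0 (0 : ℂ)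
    refine this.congr (Filter.Eventually.of_forall fun v => ?_)
    simp
  have hI : ∀ (α β : Measure ℂ) [IsProbabilityMeasure α] [IsProbabilityMeasure β],
      Integrable (fun v : ℂ => (Real.exp (-(1 / (4 * t)) * ‖v‖ ^ 2) : ℂ) *
        (charFun α v * conj (charFun β v))) := by
    intro α β _ _
    refine hint.mul_bdd (c := 1) ?_ ?_
    · apply Continuous.aestronglyMeasurable
      have h1 : Continuous (charFun α) := continuous_charFun
      have h2 : Continuous (charFun β) := continuous_charFun
      fun_prop
    · refine Filter.Eventually.of_forall fun v => ?_
      rw [norm_mul, RCLike.norm_conj]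
      exact mul_le_one₀ (norm_charFun_le_one v) (norm_nonneg _) (norm_charFun_le_one v)
  set f : ℂ → ℝ := fun v => Real.exp (-(1 / (4 * t)) * ‖v‖ ^ 2) *
    ‖charFun μ v - charFun ν v‖ ^ 2 with hf
  have hfc : Continuous f := by fun_prop
  have hpt : ∀ v : ℂ, (f v : ℂ) =
      ((Real.exp (-(1 / (4 * t)) * ‖v‖ ^ 2) : ℂ) * (charFun μ v * conj (charFun μ v)) +
      (Real.exp (-(1 / (4 * t)) * ‖v‖ ^ 2) : ℂ) * (charFun ν v * conj (charFun ν v))) -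
      ((Real.exp (-(1 / (4 * t)) * ‖v‖ ^ 2) : ℂ) * (charFun μ v * conj (charFun ν v)) +
      (Real.exp (-(1 / (4 * t)) * ‖v‖ ^ 2) : ℂ) * (charFun ν v * conj (charFun μ v))) := by
    intro v
    rw [hf]
    simp only [Complex.ofReal_mul, Complex.ofReal_pow]
    rw [← Complex.mul_conj', map_sub]
    ring
  have hfi' : Integrable (fun v => (f v : ℂ)) := by
    simp_rw [hpt]
    exact ((hI μ μ).add (hI ν ν)).sub ((hI μ ν).add (hI ν μ))
  have hfi : Integrable f := by
    simpa using hfi'.re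
  have hpos : 0 < ∫ v, f v := by
    rw [integral_pos_iff_support_of_nonneg (fun v => by positivity) hfi]
    have hopen : IsOpen (Function.support f) := hfc.isOpen_support
    apply hopen.measure_pos volume
    by_contra hemp
    rw [Set.not_nonempty_iff_eq_empty, Function.support_eq_empty_iff] at hemp
    apply hne
    apply Measure.ext_of_charFun
    ext1 v
    have := congrFun hemp v
    simp only [hf, Pi.zero_apply, mul_eq_zero, Real.exp_ne_zero, false_or] at this
    rw [← sub_eq_zero]
    simpa using this
  have hsum : (((∫ p, Real.exp (-t * ‖p.1 - p.2‖ ^ 2) ∂(μ.prod μ)) +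
    (∫ p, Real.exp (-t * ‖p.1 - p.2‖ ^ 2) ∂(ν.prod ν)) -
    ((∫ p, Real.exp (-t * ‖p.1 - p.2‖ ^ 2) ∂(μ.prod ν)) +
    (∫ p, Real.exp (-t * ‖p.1 - p.2‖ ^ 2) ∂(ν.prod μ))) : ℝ) : ℂ) =
      (((4 * Real.pi * t)⁻¹ * ∫ v, f v : ℝ) : ℂ) := by
    rw [Complex.ofReal_mul, ← integral_complex_ofReal]
    simp_rw [hpt]
    have e := integral_sub ((hI μ μ).add (hI ν ν)) ((hI μ ν).add (hI ν μ))
    simp only [Pi.add_apply] at e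
    rw [e, integral_add (hI μ μ) (hI ν ν), integral_add (hI μ ν) (hI ν μ)]
    rw [Complex.ofReal_sub, Complex.ofReal_add, Complex.ofReal_add,
      gauss_fourier t ht μ μ, gauss_fourier t ht ν ν, gauss_fourier t ht μ ν,
      gauss_fourier t ht ν μ]
    push_cast
    ring
  have hsum' := Complex.ofReal_injective hsum
  have : 0 < (4 * Real.pi * t)⁻¹ * ∫ v, f v := by positivity
  linarith

open scoped NNReal ENNReal in
noncomputable def kM (R : ℝ) (M : ℕ) (p : ℂ × ℂ) : ℝ≥0 :=
  (Real.log (R / max ‖p.1 - p.2‖ (Real.exp (-(M : ℝ))))).toNNReal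

open scoped NNReal ENNReal in
noncomputable def LK (R : ℝ) (p : ℂ × ℂ) : ℝ≥0∞ := ⨆ M : ℕ, (kM R M p : ℝ≥0∞)

lemma max_exp_pos (x : ℝ) (M : ℕ) : 0 < max x (Real.exp (-(M : ℝ))) :=
  lt_max_of_lt_right (Real.exp_pos _)

lemma kM_continuous {R : ℝ} (hR : 1 ≤ R) (M : ℕ) : Continuous (kM R M) := by
  unfold kM
  apply continuous_real_toNNReal.comp
  apply Continuous.log
  · apply Continuous.div continuous_const (by fun_prop)
    intro p
    exact (max_exp_pos _ _).ne'
  · intro p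
    exact (div_pos (by linarith) (max_exp_pos _ _)).ne'

lemma kM_mono {R : ℝ} (hR : 1 ≤ R) (p : ℂ × ℂ) : Monotone (fun M => kM R M p) := by
  intro M N h
  apply Real.toNNReal_le_toNNReal
  apply Real.log_le_log (div_pos (by linarith) (max_exp_pos _ _))
  apply div_le_div_of_nonneg_left (by linarith) (max_exp_pos _ _)
  apply max_le_max_left
  apply Real.exp_le_exp.mpr
  have : (M : ℝ) ≤ N := by exact_mod_cast h
  linarith

lemma kM_le {R : ℝ} (hR : 1 ≤ R) (M : ℕ) (p : ℂ × ℂ) :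
    kM R M p ≤ (Real.log R + M).toNNReal := by
  apply Real.toNNReal_le_toNNReal
  rw [Real.log_div (by linarith) (max_exp_pos _ _).ne']
  have : Real.log (Real.exp (-(M : ℝ))) ≤ Real.log (max ‖p.1 - p.2‖ (Real.exp (-(M : ℝ)))) :=
    Real.log_le_log (Real.exp_pos _) (le_max_right _ _)
  rw [Real.log_exp] at this
  linarith

lemma LK_measurable {R : ℝ} (hR : 1 ≤ R) : Measurable (LK R) := by
  unfold LK
  exact Measurable.iSup fun M => (kM_continuous hR M).measurable.coe_nnreal_ennreal

lemma LK_off {R : ℝ} (hR : 1 ≤ R) {p : ℂ × ℂ} (hp : p.1 ≠ p.2) :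
    LK R p = ENNReal.ofReal (Real.log (R / ‖p.1 - p.2‖)) := by
  have hn : 0 < ‖p.1 - p.2‖ := norm_pos_iff.mpr (sub_ne_zero.mpr hp)
  apply le_antisymm
  · apply iSup_le
    intro M
    apply ENNReal.ofReal_le_ofReal
    apply Real.log_le_log (div_pos (by linarith) (max_exp_pos _ _))
    exact div_le_div_of_nonneg_left (by linarith) hn (le_max_left _ _)
  · obtain ⟨M, hM⟩ := exists_nat_ge (-Real.log ‖p.1 - p.2‖)
    refine le_iSup_of_le M ?_
    apply ENNReal.ofReal_le_ofReal
    rw [max_eq_left]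
    rw [← Real.exp_log hn]
    apply Real.exp_le_exp.mpr
    linarith

lemma LK_diag {R : ℝ} (hR : 1 ≤ R) (z : ℂ) : LK R (z, z) = ⊤ := by
  rw [eq_top_iff, ← ENNReal.iSup_natCast]
  apply iSup_mono
  intro M
  have : ((M : ℕ) : ENNReal) = ENNReal.ofReal (M : ℝ) := by simp
  rw [this]
  apply ENNReal.ofReal_le_ofReal
  simp only [sub_self, norm_zero]
  rw [max_eq_right (Real.exp_pos _).le, Real.log_div (by linarith) (Real.exp_pos _).ne',
    Real.log_exp]
  have := Real.log_nonneg hR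
  linarith

lemma frullani (a b : ℝ) (ha : 0 < a) (hab : a ≤ b) :
    ∫⁻ t in Set.Ioi (0 : ℝ), ENNReal.ofReal ((Real.exp (-t * a) - Real.exp (-t * b)) / t) =
      ENNReal.ofReal (Real.log (b / a)) := by
  have h1 : ∀ t ∈ Set.Ioi (0 : ℝ),
      ENNReal.ofReal ((Real.exp (-t * a) - Real.exp (-t * b)) / t) =
      ∫⁻ s in Set.Ioc a b, ENNReal.ofReal (Real.exp (-t * s)) := by
    intro t ht
    have ht : 0 < t := ht
    have hi : IntervalIntegrable (fun s => Real.exp (-t * s)) volume a b :=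
      Continuous.intervalIntegrable (by fun_prop) _ _
    rw [← ofReal_integral_eq_lintegral_ofReal ((intervalIntegrable_iff_integrableOn_Ioc_of_le hab).mp hi)
      (Filter.Eventually.of_forall fun s => (Real.exp_pos _).le),
      ← intervalIntegral.integral_of_le hab]
    congr 1
    have : ∀ x ∈ Set.uIcc a b, HasDerivAt (fun s => -Real.exp (-t * s) / t) (Real.exp (-t * x)) x := by
      intro x _
      have h := (((hasDerivAt_id x).const_mul (-t)).exp.neg.div_const t)
      refine HasDerivAt.congr_deriv h ?_
      simp only [id]
      field_simp
    rw [intervalIntegral.integral_eq_sub_of_hasDerivAt this hi]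
    field_simp
    ring
  rw [setLIntegral_congr_fun measurableSet_Ioi h1, lintegral_lintegral_swap]
  · have h2 : ∀ s ∈ Set.Ioc a b,
        ∫⁻ t in Set.Ioi (0 : ℝ), ENNReal.ofReal (Real.exp (-t * s)) = ENNReal.ofReal (s⁻¹) := by
      intro s hs
      have hs : 0 < s := ha.trans hs.1
      have e : ∀ t : ℝ, -t * s = -s * t := fun t => by ring
      simp_rw [e]
      rw [← ofReal_integral_eq_lintegral_ofReal
        (integrableOn_exp_mul_Ioi (neg_lt_zero.mpr hs) 0)
        (Filter.Eventually.of_forall fun s => (Real.exp_pos _).le),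
        integral_exp_mul_Ioi (neg_lt_zero.mpr hs)]
      congr 1
      simp
    rw [setLIntegral_congr_fun measurableSet_Ioc h2]
    have hi : IntervalIntegrable (fun s : ℝ => s⁻¹) volume a b := by
      apply intervalIntegral.intervalIntegrable_inv
      · intro x hx
        rw [Set.uIcc_of_le hab] at hx
        exact (ha.trans_le hx.1).ne'
      · exact continuousOn_id
    rw [← ofReal_integral_eq_lintegral_ofReal ((intervalIntegrable_iff_integrableOn_Ioc_of_le hab).mp hi)
      ((ae_restrict_mem measurableSet_Ioc).mono fun s hs => inv_nonneg.mpr (ha.trans hs.1).le),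
      ← intervalIntegral.integral_of_le hab, integral_inv_of_pos ha (ha.trans_le hab)]
  · apply Measurable.aemeasurable
    fun_prop

lemma diag_null (μ ν : Measure ℂ) [IsProbabilityMeasure μ] [IsProbabilityMeasure ν]
    (hν : ∀ z, ν {z} = 0) : ∀ᵐ p ∂(μ.prod ν), p.1 ≠ p.2 := by
  rw [ae_iff]
  have hm : MeasurableSet {p : ℂ × ℂ | ¬ p.1 ≠ p.2} := by
    simp only [not_not]
    exact measurableSet_eq_fun measurable_fst measurable_snd
  rw [Measure.measure_prod_null hm]
  refine Filter.Eventually.of_forall fun x => ?_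
  have : (Prod.mk x ⁻¹' {p : ℂ × ℂ | ¬ p.1 ≠ p.2}) = {x} := by
    ext y
    simp [eq_comm]
  change ν (Prod.mk x ⁻¹' {p : ℂ × ℂ | ¬ p.1 ≠ p.2}) = 0
  rw [this]
  exact hν x

lemma supp_ae {D : Set ℂ} {R : ℝ} (hDR : ∀ z ∈ D, ∀ w ∈ D, ‖z - w‖ ≤ R)
    (μ ν : Measure ℂ) [IsProbabilityMeasure μ] [IsProbabilityMeasure ν]
    (hμ : μ Dᶜ = 0) (hν : ν Dᶜ = 0) : ∀ᵐ p ∂(μ.prod ν), ‖p.1 - p.2‖ ≤ R := by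
  have h1 : ∀ᵐ p ∂(μ.prod ν), p.1 ∈ D :=
    Measure.quasiMeasurePreserving_fst.ae (μa := μ.prod ν) (p := fun z => z ∈ D) (by rwa [ae_iff])
  have h2 : ∀ᵐ p ∂(μ.prod ν), p.2 ∈ D :=
    Measure.quasiMeasurePreserving_snd.ae (μa := μ.prod ν) (p := fun z => z ∈ D) (by rwa [ae_iff])
  filter_upwards [h1, h2] with p hp hq using hDR _ hp _ hq

lemma LK_gauss {D : Set ℂ} {R : ℝ} (hR : 1 ≤ R) (hDR : ∀ z ∈ D, ∀ w ∈ D, ‖z - w‖ ≤ R)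
    (μ ν : Measure ℂ) [IsProbabilityMeasure μ] [IsProbabilityMeasure ν]
    (hμ : μ Dᶜ = 0) (hν : ν Dᶜ = 0) (hνa : ∀ z, ν {z} = 0) :
    (∀ t : ℝ, 0 < t → 0 ≤ ((∫ p, Real.exp (-t * ‖p.1 - p.2‖ ^ 2) ∂(μ.prod ν)) -
          Real.exp (-t * R ^ 2)) / t) ∧
    2 * ∫⁻ p, LK R p ∂(μ.prod ν) =
      ∫⁻ t in Set.Ioi (0 : ℝ),
        ENNReal.ofReal (((∫ p, Real.exp (-t * ‖p.1 - p.2‖ ^ 2) ∂(μ.prod ν)) -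
          Real.exp (-t * R ^ 2)) / t) := by
  have hs := supp_ae hDR μ ν hμ hν
  have hd := diag_null μ ν hνa
  have hint : ∀ t : ℝ, 0 < t →
      Integrable (fun p : ℂ × ℂ => Real.exp (-t * ‖p.1 - p.2‖ ^ 2)) (μ.prod ν) := by
    intro t ht
    refine Integrable.of_bound (C := 1) (Continuous.aestronglyMeasurable (by fun_prop)) ?_
    refine Filter.Eventually.of_forall fun p => ?_
    rw [Real.norm_eq_abs, abs_of_pos (Real.exp_pos _), Real.exp_le_one_iff]
    have : 0 ≤ t * ‖p.1 - p.2‖ ^ 2 := by positivity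
    linarith
  have hnn : ∀ t : ℝ, 0 < t → ∀ᵐ p ∂(μ.prod ν), 0 ≤
      (Real.exp (-t * ‖p.1 - p.2‖ ^ 2) - Real.exp (-t * R ^ 2)) / t := by
    intro t ht
    filter_upwards [hs] with p hp
    apply div_nonneg _ ht.le
    rw [sub_nonneg, Real.exp_le_exp]
    have : ‖p.1 - p.2‖ ^ 2 ≤ R ^ 2 := by gcongr
    nlinarith
  have hint2 : ∀ t : ℝ, 0 < t → Integrable (fun p : ℂ × ℂ =>
      (Real.exp (-t * ‖p.1 - p.2‖ ^ 2) - Real.exp (-t * R ^ 2)) / t) (μ.prod ν) := fun t ht =>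
    ((hint t ht).sub (integrable_const _)).div_const t
  have hval : ∀ t : ℝ, 0 < t → ∫ p,
      (Real.exp (-t * ‖p.1 - p.2‖ ^ 2) - Real.exp (-t * R ^ 2)) / t ∂(μ.prod ν) =
      ((∫ p, Real.exp (-t * ‖p.1 - p.2‖ ^ 2) ∂(μ.prod ν)) - Real.exp (-t * R ^ 2)) / t := by
    intro t ht
    rw [integral_div, integral_sub (hint t ht) (integrable_const _)]
    simp
  refine ⟨fun t ht => ?_, ?_⟩
  · rw [← hval t ht]
    exact integral_nonneg_of_ae (hnn t ht)
  · have h1 : ∀ᵐ p ∂(μ.prod ν), 2 * LK R p = ∫⁻ t in Set.Ioi (0 : ℝ),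
        ENNReal.ofReal ((Real.exp (-t * ‖p.1 - p.2‖ ^ 2) - Real.exp (-t * R ^ 2)) / t) := by
      filter_upwards [hs, hd] with p hp hq
      have hn : 0 < ‖p.1 - p.2‖ := norm_pos_iff.mpr (sub_ne_zero.mpr hq)
      rw [frullani _ _ (by positivity) (by gcongr), LK_off hR hq, ← div_pow, Real.log_pow,
        ENNReal.ofReal_mul (by positivity)]
      simp
    rw [← lintegral_const_mul _ (LK_measurable hR), lintegral_congr_ae h1,
      lintegral_lintegral_swap]
    · apply setLIntegral_congr_fun measurableSet_Ioi
      intro t ht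
      have ht : 0 < t := ht
      simp only
      rw [← ofReal_integral_eq_lintegral_ofReal (hint2 t ht) (hnn t ht), hval t ht]
    · apply Measurable.aemeasurable
      fun_prop

lemma LK_strict {D : Set ℂ} {R : ℝ} (hR : 1 ≤ R) (hDR : ∀ z ∈ D, ∀ w ∈ D, ‖z - w‖ ≤ R)
    (μ ν : Measure ℂ) [IsProbabilityMeasure μ] [IsProbabilityMeasure ν]
    (hμ : μ Dᶜ = 0) (hν : ν Dᶜ = 0) (hμa : ∀ z, μ {z} = 0) (hνa : ∀ z, ν {z} = 0)
    (hfμ : ∫⁻ p, LK R p ∂(μ.prod μ) ≠ ⊤) (hfν : ∫⁻ p, LK R p ∂(ν.prod ν) ≠ ⊤)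
    (hne : μ ≠ ν) :
    (∫⁻ p, LK R p ∂(μ.prod ν)) + (∫⁻ p, LK R p ∂(ν.prod μ)) <
    (∫⁻ p, LK R p ∂(μ.prod μ)) + (∫⁻ p, LK R p ∂(ν.prod ν)) := by
  obtain ⟨p1, e1⟩ := LK_gauss hR hDR μ ν hμ hν hνa
  obtain ⟨p2, e2⟩ := LK_gauss hR hDR ν μ hν hμ hμa
  obtain ⟨p3, e3⟩ := LK_gauss hR hDR μ μ hμ hμ hμa
  obtain ⟨p4, e4⟩ := LK_gauss hR hDR ν ν hν hν hνa
  have hmeas : ∀ (α β : Measure ℂ) [IsProbabilityMeasure α] [IsProbabilityMeasure β],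
      Measurable (fun t : ℝ => ENNReal.ofReal
        (((∫ p, Real.exp (-t * ‖p.1 - p.2‖ ^ 2) ∂(α.prod β)) - Real.exp (-t * R ^ 2)) / t)) := by
    intro α β _ _
    have : Measurable (fun t : ℝ => ∫ p, Real.exp (-t * ‖p.1 - p.2‖ ^ 2) ∂(α.prod β)) := by
      have : StronglyMeasurable (Function.uncurry fun (t : ℝ) (p : ℂ × ℂ) =>
          Real.exp (-t * ‖p.1 - p.2‖ ^ 2)) := by
        apply Continuous.stronglyMeasurable
        unfold Function.uncurry
        fun_prop
      exact this.integral_prod_right.measurable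
    fun_prop
  have h2 : (2 : ENNReal) * ((∫⁻ p, LK R p ∂(μ.prod ν)) + (∫⁻ p, LK R p ∂(ν.prod μ))) <
      2 * ((∫⁻ p, LK R p ∂(μ.prod μ)) + (∫⁻ p, LK R p ∂(ν.prod ν))) := by
    have hfin : 2 * ((∫⁻ p, LK R p ∂(μ.prod μ)) + (∫⁻ p, LK R p ∂(ν.prod ν))) ≠ ⊤ :=
      ENNReal.mul_ne_top (by simp) (ENNReal.add_ne_top.mpr ⟨hfμ, hfν⟩)
    rw [mul_add, e3, e4, ← lintegral_add_left (hmeas μ μ)] at hfin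
    rw [mul_add, mul_add, e1, e2, e3, e4, ← lintegral_add_left (hmeas μ ν),
      ← lintegral_add_left (hmeas μ μ)]
    have hlt : ∀ t : ℝ, 0 < t →
      ENNReal.ofReal (((∫ p, Real.exp (-t * ‖p.1 - p.2‖ ^ 2) ∂(μ.prod ν)) -
          Real.exp (-t * R ^ 2)) / t) +
      ENNReal.ofReal (((∫ p, Real.exp (-t * ‖p.1 - p.2‖ ^ 2) ∂(ν.prod μ)) -
          Real.exp (-t * R ^ 2)) / t) <
      ENNReal.ofReal (((∫ p, Real.exp (-t * ‖p.1 - p.2‖ ^ 2) ∂(μ.prod μ)) -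
          Real.exp (-t * R ^ 2)) / t) +
      ENNReal.ofReal (((∫ p, Real.exp (-t * ‖p.1 - p.2‖ ^ 2) ∂(ν.prod ν)) -
          Real.exp (-t * R ^ 2)) / t) := by
      intro t ht
      have hg := gauss_strict t ht μ ν hne
      rw [← ENNReal.ofReal_add (p1 t ht) (p2 t ht), ← ENNReal.ofReal_add (p3 t ht) (p4 t ht)]
      rw [ENNReal.ofReal_lt_ofReal_iff_of_nonneg (add_nonneg (p1 t ht) (p2 t ht)),
        ← add_div, ← add_div]
      apply div_lt_div_of_pos_right _ ht
      linarith
    apply lintegral_strict_mono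
    · simp
    · exact ((hmeas μ μ).add (hmeas ν ν)).aemeasurable
    · refine ne_top_of_le_ne_top hfin ?_
      apply setLIntegral_mono' measurableSet_Ioi
      intro t ht
      exact (hlt t ht).le
    · filter_upwards [ae_restrict_mem measurableSet_Ioi] with t ht
      exact hlt t ht
  exact lt_of_mul_lt_mul_left' h2

lemma bridge {D : Set ℂ} {R : ℝ} (hR : 1 ≤ R) (hDR : ∀ z ∈ D, ∀ w ∈ D, ‖z - w‖ ≤ R)
    (V : ℂ → ℝ) (U : BoundedContinuousFunction ℂ NNReal) (C : ℝ)
    (hU : ∀ z ∈ D, (U z : ℝ) = V z + C)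
    (μ : Measure ℂ) [IsProbabilityMeasure μ] (hμ : μ Dᶜ = 0) (hμa : ∀ z, μ {z} = 0) :
    weightedEnergy V μ =
      (((∫⁻ z, U z ∂μ) + ∫⁻ p, LK R p ∂(μ.prod μ) : ENNReal) : EReal) -
        ((C + Real.log R : ℝ) : EReal) := by
  have hs := supp_ae hDR μ μ hμ hμ
  have hd := diag_null μ μ hμa
  have hlogR : 0 ≤ Real.log R := Real.log_nonneg hR
  have hr : (μ.prod μ).restrict {q : ℂ × ℂ | q.1 ≠ q.2} = μ.prod μ :=
    Measure.restrict_eq_self_of_ae_mem hd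
  have hmA : Measurable (fun p : ℂ × ℂ => ENNReal.ofReal (Real.log ‖p.1 - p.2‖⁻¹)) := by fun_prop
  have hmB : Measurable (fun p : ℂ × ℂ => ENNReal.ofReal (-Real.log ‖p.1 - p.2‖⁻¹)) := by fun_prop
  -- potential part
  have hUint : Integrable (fun z => (U z : ℝ)) μ := by
    exact U.integrable_of_nnreal μ
  have hD : ∀ᵐ z ∂μ, z ∈ D := by rwa [ae_iff]
  have hVi : ∫ z, V z ∂μ = (∫ z, (U z : ℝ) ∂μ) - C := by
    have : ∫ z, V z ∂μ = ∫ z, ((U z : ℝ) - C) ∂μ := by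
      apply integral_congr_ae
      filter_upwards [hD] with z hz
      rw [hU z hz]; ring
    rw [this, integral_sub hUint (integrable_const _)]
    simp
  have hUl : ∫⁻ z, U z ∂μ = ENNReal.ofReal (∫ z, (U z : ℝ) ∂μ) := by
    rw [ofReal_integral_eq_lintegral_ofReal hUint
      (Filter.Eventually.of_forall fun z => NNReal.coe_nonneg _)]
    simp
  have hU0 : 0 ≤ ∫ z, (U z : ℝ) ∂μ := integral_nonneg fun z => NNReal.coe_nonneg _
  -- log part
  have hB : ∫⁻ p, ENNReal.ofReal (-Real.log ‖p.1 - p.2‖⁻¹) ∂(μ.prod μ) ≠ ⊤ := by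
    have : ∫⁻ p, ENNReal.ofReal (-Real.log ‖p.1 - p.2‖⁻¹) ∂(μ.prod μ) ≤
        ∫⁻ p, ENNReal.ofReal (Real.log R) ∂(μ.prod μ) := by
      apply lintegral_mono_ae
      filter_upwards [hs, hd] with p hp hq
      have hn : 0 < ‖p.1 - p.2‖ := norm_pos_iff.mpr (sub_ne_zero.mpr hq)
      apply ENNReal.ofReal_le_ofReal
      rw [Real.log_inv, neg_neg]
      exact Real.log_le_log hn hp
    refine ne_top_of_le_ne_top ?_ this
    simp
  have hsum : (∫⁻ p, LK R p ∂(μ.prod μ)) +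
      ∫⁻ p, ENNReal.ofReal (-Real.log ‖p.1 - p.2‖⁻¹) ∂(μ.prod μ) =
      (∫⁻ p, ENNReal.ofReal (Real.log ‖p.1 - p.2‖⁻¹) ∂(μ.prod μ)) + ENNReal.ofReal (Real.log R) := by
    have : ENNReal.ofReal (Real.log R) = ∫⁻ p, ENNReal.ofReal (Real.log R) ∂(μ.prod μ) := by simp
    rw [this, ← lintegral_add_left (LK_measurable hR), ← lintegral_add_left hmA]
    apply lintegral_congr_ae
    filter_upwards [hs, hd] with p hp hq
    have hn : 0 < ‖p.1 - p.2‖ := norm_pos_iff.mpr (sub_ne_zero.mpr hq)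
    rw [LK_off hR hq, Real.log_inv, Real.log_div (by linarith) hn.ne', neg_neg]
    have h1 := Real.log_le_log hn hp
    rcases le_total 0 (Real.log ‖p.1 - p.2‖) with h | h
    · rw [← ENNReal.ofReal_add (by linarith) h, ENNReal.ofReal_of_nonpos (p := -_) (by linarith)]
      simp
    · rw [ENNReal.ofReal_of_nonpos h, ← ENNReal.ofReal_add (by linarith) hlogR, add_zero]
      congr 1
      ring
  unfold weightedEnergy logEnergy
  rw [hr, hVi, hUl]
  generalize (∫⁻ p, ENNReal.ofReal (-Real.log ‖p.1 - p.2‖⁻¹) ∂(μ.prod μ)) = B at *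
  generalize (∫⁻ p, ENNReal.ofReal (Real.log ‖p.1 - p.2‖⁻¹) ∂(μ.prod μ)) = A at *
  generalize (∫⁻ p, LK R p ∂(μ.prod μ)) = L at *
  generalize (∫ z, (U z : ℝ) ∂μ) = u at *
  lift B to NNReal using hB
  by_cases hL : L = ⊤
  · subst hL
    have hA : A = ⊤ := by
      by_contra h
      have : A + ENNReal.ofReal (Real.log R) ≠ ⊤ := ENNReal.add_ne_top.mpr ⟨h, by simp⟩
      rw [← hsum] at this
      simp at this
    subst hA
    rw [add_top]
    simp only [EReal.coe_ennreal_top]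
    have hBr : ((B : ENNReal) : EReal) = (((B : ℝ)) : EReal) := by rfl
    rw [hBr, EReal.top_sub_coe, EReal.top_sub_coe, EReal.coe_add_top]
  · lift L to NNReal using hL
    have hA : A ≠ ⊤ := by
      have : (L : ENNReal) + B ≠ ⊤ := by simp
      rw [hsum] at this
      exact (ENNReal.add_ne_top.mp this).1
    lift A to NNReal using hA
    have hreal : (L : ℝ) + B = A + Real.log R := by
      have := congrArg ENNReal.toReal hsum
      rw [ENNReal.toReal_add (by simp) (by simp), ENNReal.toReal_add (by simp) (by simp),
        ENNReal.toReal_ofReal hlogR] at this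
      simpa using this
    have hBr : ((B : ENNReal) : EReal) = (((B : ℝ)) : EReal) := by rfl
    have hAr : ((A : ENNReal) : EReal) = (((A : ℝ)) : EReal) := by rfl
    have hur : ((ENNReal.ofReal u : ENNReal) : EReal) = (u : EReal) := by
      rw [EReal.coe_ennreal_ofReal, max_eq_left]
      exact_mod_cast hU0
    have hLr : ((L : ENNReal) : EReal) = (((L : ℝ)) : EReal) := by rfl
    rw [EReal.coe_ennreal_add, hBr, hAr, hLr, hur]
    norm_cast
    linarith

lemma F_lsc {R : ℝ} (hR : 1 ≤ R) (U : BoundedContinuousFunction ℂ NNReal) :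
    LowerSemicontinuous (fun P : ProbabilityMeasure ℂ =>
      (∫⁻ z, U z ∂(P : Measure ℂ)) +
        ∫⁻ p, LK R p ∂((P : Measure ℂ).prod (P : Measure ℂ))) := by
  apply LowerSemicontinuous.add
  · exact (ProbabilityMeasure.continuous_lintegral_boundedContinuousFunction U).lowerSemicontinuous
  · have h : ∀ P : ProbabilityMeasure ℂ,
        ∫⁻ p, LK R p ∂((P : Measure ℂ).prod (P : Measure ℂ)) =
        ⨆ M : ℕ, ∫⁻ p, kM R M p ∂((P : Measure ℂ).prod (P : Measure ℂ)) := by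
      intro P
      unfold LK
      apply lintegral_iSup
      · exact fun M => (kM_continuous hR M).measurable.coe_nnreal_ennreal
      · intro M N hMN p
        exact ENNReal.coe_le_coe.mpr (kM_mono hR p hMN)
    simp_rw [h]
    apply lowerSemicontinuous_iSup
    intro M
    apply Continuous.lowerSemicontinuous
    let f : BoundedContinuousFunction (ℂ × ℂ) NNReal :=
      BoundedContinuousFunction.mkOfBound ⟨kM R M, kM_continuous hR M⟩
        ((Real.log R + M).toNNReal : ℝ) (by
          intro x y
          have hx : (kM R M x : ℝ) ≤ _ := NNReal.coe_le_coe.mpr (kM_le hR M x)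
          have hy : (kM R M y : ℝ) ≤ _ := NNReal.coe_le_coe.mpr (kM_le hR M y)
          have hx0 := (kM R M x).coe_nonneg
          have hy0 := (kM R M y).coe_nonneg
          simp only [ContinuousMap.coe_mk, NNReal.dist_eq]
          rw [abs_le]
          constructor <;> linarith)
    have hc := ProbabilityMeasure.continuous_lintegral_boundedContinuousFunction f
    have hp : Continuous (fun P : ProbabilityMeasure ℂ => P.prod P) :=
      (ProbabilityMeasure.continuous_prod (α := ℂ) (β := ℂ)).comp
        (continuous_id.prodMk continuous_id)
    exact hc.comp hp

lemma atomless_of_finite {R : ℝ} (hR : 1 ≤ R) (μ : Measure ℂ) [IsProbabilityMeasure μ]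
    (h : ∫⁻ p, LK R p ∂(μ.prod μ) ≠ ⊤) (z : ℂ) : μ {z} = 0 := by
  by_contra hz
  have h1 : ∀ᵐ p ∂(μ.prod μ), LK R p < ⊤ := ae_lt_top (LK_measurable hR) h
  rw [ae_iff] at h1
  have h2 : (μ.prod μ) ({z} ×ˢ {z}) ≤ (μ.prod μ) {p | ¬ LK R p < ⊤} := by
    apply measure_mono
    rintro ⟨a, b⟩ ⟨ha, hb⟩
    simp only [Set.mem_singleton_iff] at ha hb
    subst ha hb
    simp [LK_diag hR]
  rw [h1, Measure.prod_prod] at h2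
  simp [hz] at h2

lemma exists_finite {D : Set ℂ} (hD : IsCompact D) (hDpos : 0 < volume D) {R : ℝ} (hR : 1 ≤ R)
    (hDR : ∀ z ∈ D, ∀ w ∈ D, ‖z - w‖ ≤ R) :
    ∃ μ : Measure ℂ, IsProbabilityMeasure μ ∧ μ Dᶜ = 0 ∧ ∫⁻ p, LK R p ∂(μ.prod μ) ≠ ⊤ := by
  have hDf : volume D ≠ ⊤ := hD.measure_lt_top.ne
  let μ : Measure ℂ := (volume D)⁻¹ • volume.restrict D
  have hprob : IsProbabilityMeasure μ := by
    constructor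
    simp [μ, ENNReal.inv_mul_cancel hDpos.ne' hDf]
  have hsupp : μ Dᶜ = 0 := by
    simp [μ, Measure.restrict_apply hD.measurableSet.compl]
  refine ⟨μ, hprob, hsupp, ?_⟩
  let g : ℂ → ENNReal := (Metric.ball (0 : ℂ) (R + 1)).indicator
    (fun u => ENNReal.ofReal (R * ‖u‖⁻¹))
  have hgfin : ∫⁻ u, g u ≠ ⊤ := by
    rw [lintegral_indicator measurableSet_ball]
    have : IntegrableOn (fun u : ℂ => R * ‖u‖⁻¹) (Metric.ball (0 : ℂ) (R + 1)) := by
      refine integrableOn_ball_of_norm_le_rpow (C := R) (α := 1) ?_ ?_ ?_ ?_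
      · rw [Complex.finrank_real_complex]
        norm_num
      · rw [Complex.finrank_real_complex]
        norm_num
      · refine Filter.Eventually.of_forall fun u => ?_
        rw [Real.rpow_neg_one, Real.norm_eq_abs, abs_of_nonneg (by positivity)]
      · exact Measurable.aestronglyMeasurable (by fun_prop)
    have h2 := this.2
    rw [hasFiniteIntegral_iff_ofReal (Filter.Eventually.of_forall fun u => by positivity)] at h2
    exact h2.ne
  have hle : ∀ z ∈ D, ∫⁻ w, LK R (z, w) ∂μ ≤ (volume D)⁻¹ * ∫⁻ u, g u := by
    intro z hz
    simp only [μ, lintegral_smul_measure, smul_eq_mul]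
    refine mul_le_mul_right ?_ _
    rw [← lintegral_sub_right_eq_self g z, ← lintegral_indicator hD.measurableSet]
    apply lintegral_mono_ae
    have hnz : ∀ᵐ w : ℂ, w ≠ z := by simp [ae_iff]
    filter_upwards [hnz] with w hw
    by_cases hwD : w ∈ D
    · rw [Set.indicator_of_mem hwD, LK_off hR (by simpa using hw.symm)]
      have hb : w - z ∈ Metric.ball (0 : ℂ) (R + 1) := by
        rw [mem_ball_zero_iff]
        linarith [hDR w hwD z hz]
      simp only [g, Set.indicator_of_mem hb]
      apply ENNReal.ofReal_le_ofReal
      rw [norm_sub_rev w z, ← div_eq_mul_inv]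
      exact Real.log_le_self (by positivity)
    · rw [Set.indicator_of_notMem hwD]
      simp
  rw [lintegral_prod _ (LK_measurable hR).aemeasurable]
  have hDae : ∀ᵐ z ∂μ, z ∈ D := by rwa [ae_iff]
  have : ∫⁻ z, ∫⁻ w, LK R (z, w) ∂μ ∂μ ≤ ∫⁻ _, ((volume D)⁻¹ * ∫⁻ u, g u) ∂μ := by
    apply lintegral_mono_ae
    filter_upwards [hDae] with z hz using hle z hz
  refine ne_top_of_le_ne_top ?_ this
  rw [lintegral_const, measure_univ, mul_one]
  exact ENNReal.mul_ne_top (ENNReal.inv_ne_top.mpr hDpos.ne') hgfin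

lemma exists_U {D : Set ℂ} (hD : IsCompact D) (V : ℂ → ℝ) (hV : ContinuousOn V D) :
    ∃ (U : BoundedContinuousFunction ℂ NNReal) (C : ℝ), ∀ z ∈ D, (U z : ℝ) = V z + C := by
  have : CompactSpace D := isCompact_iff_compactSpace.mp hD
  let f : BoundedContinuousFunction D ℝ :=
    BoundedContinuousFunction.mkOfCompact ⟨D.domRestrict V, hV.domRestrict⟩
  obtain ⟨g, -, hg⟩ := BoundedContinuousFunction.exists_norm_eq_domRestrict_eq_of_closed f hD.isClosed
  have hc : Continuous (fun z => (g z + ‖g‖).toNNReal) := by fun_prop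
  have hnn : ∀ z, 0 ≤ g z + ‖g‖ := fun z => by
    have := g.norm_coe_le_norm z
    rw [Real.norm_eq_abs] at this
    linarith [(abs_le.mp this).1]
  refine ⟨BoundedContinuousFunction.mkOfBound ⟨_, hc⟩ (2 * ‖g‖) ?_, ‖g‖, ?_⟩
  · intro x y
    simp only [ContinuousMap.coe_mk, NNReal.dist_eq]
    rw [Real.coe_toNNReal _ (hnn x), Real.coe_toNNReal _ (hnn y), add_sub_add_right_eq_sub,
      ← Real.dist_eq]
    exact g.dist_le_two_norm x y
  · intro z hz
    simp only [BoundedContinuousFunction.mkOfBound_coe, ContinuousMap.coe_mk]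
    rw [Real.coe_toNNReal _ (hnn z)]
    have : g z = V z := congrFun (congrArg DFunLike.coe hg) ⟨z, hz⟩
    rw [this]

lemma half_energy {R : ℝ} (U : BoundedContinuousFunction ℂ NNReal)
    (μ ν : Measure ℂ) [IsProbabilityMeasure μ] [IsProbabilityMeasure ν] :
    4 * ((∫⁻ z, U z ∂((2 : ENNReal)⁻¹ • (μ + ν))) +
      ∫⁻ p, LK R p ∂(((2 : ENNReal)⁻¹ • (μ + ν)).prod ((2 : ENNReal)⁻¹ • (μ + ν)))) =
    2 * (∫⁻ z, U z ∂μ) + 2 * (∫⁻ z, U z ∂ν) +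
      ((∫⁻ p, LK R p ∂(μ.prod μ)) + (∫⁻ p, LK R p ∂(ν.prod ν)) +
      ((∫⁻ p, LK R p ∂(μ.prod ν)) + (∫⁻ p, LK R p ∂(ν.prod μ)))) := by
  have h4 : (4 : ENNReal) = 2 * 2 := by norm_num
  have h2 : (2 : ENNReal) * 2⁻¹ = 1 := ENNReal.mul_inv_cancel (by simp) (by simp)
  have hp : ((2 : ENNReal)⁻¹ • (μ + ν)).prod ((2 : ENNReal)⁻¹ • (μ + ν)) =
      (2 : ENNReal)⁻¹ • (2 : ENNReal)⁻¹ • (μ.prod μ + μ.prod ν + (ν.prod μ + ν.prod ν)) := by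
    rw [Measure.prod_smul_left, Measure.prod_smul_right, Measure.add_prod, Measure.prod_add,
      Measure.prod_add]
  rw [hp, lintegral_smul_measure, lintegral_smul_measure, lintegral_smul_measure,
    lintegral_add_measure, lintegral_add_measure, lintegral_add_measure, lintegral_add_measure]
  simp only [smul_eq_mul]
  rw [mul_add, h4]
  have e1 : ∀ x : ENNReal, 2 * 2 * (2⁻¹ * x) = 2 * x := fun x => by
    rw [mul_assoc, ← mul_assoc 2 2⁻¹, h2, one_mul]
  have e2 : ∀ x : ENNReal, 2 * 2 * (2⁻¹ * (2⁻¹ * x)) = x := fun x => by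
    rw [e1, ← mul_assoc, h2, one_mul]
  rw [e1, e2]
  ring

/-- Every continuous potential `V` on a compact domain `D ⊆ ℂ` of positive Lebesgue measure
admits a unique equilibrium measure: a Borel probability measure without point masses
minimizing `I_V` over all atomless Borel probability measures on `D`. -/
theorem stmt_13 (D : Set ℂ) (hD : IsCompact D) (hDpos : 0 < volume D)
    (V : ℂ → ℝ) (hV : ContinuousOn V D) :
    ∃! μ₀ : Measure ℂ,
      (IsProbabilityMeasure μ₀ ∧ μ₀ Dᶜ = 0 ∧ (∀ z : ℂ, μ₀ {z} = 0)) ∧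
      ∀ μ : Measure ℂ, IsProbabilityMeasure μ → μ Dᶜ = 0 → (∀ z : ℂ, μ {z} = 0) →
        weightedEnergy V μ₀ ≤ weightedEnergy V μ := by
  obtain ⟨R, hR, hDR⟩ : ∃ R : ℝ, 1 ≤ R ∧ ∀ z ∈ D, ∀ w ∈ D, ‖z - w‖ ≤ R := by
    obtain ⟨C, hC⟩ := Metric.isBounded_iff.mp hD.isBounded
    refine ⟨max 1 C, le_max_left _ _, fun z hz w hw => ?_⟩
    rw [← dist_eq_norm]
    exact (hC hz hw).trans (le_max_right _ _)
  obtain ⟨U, C, hU⟩ := exists_U hD V hV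
  let F : Measure ℂ → ENNReal := fun μ => (∫⁻ z, U z ∂μ) + ∫⁻ p, LK R p ∂(μ.prod μ)
  have hbr : ∀ μ : Measure ℂ, IsProbabilityMeasure μ → μ Dᶜ = 0 → (∀ z : ℂ, μ {z} = 0) →
      weightedEnergy V μ = (F μ : EReal) - ((C + Real.log R : ℝ) : EReal) := by
    intro μ h1 h2 h3
    exact bridge hR hDR V U C hU μ h2 h3
  have hUfin : ∀ μ : Measure ℂ, IsProbabilityMeasure μ → ∫⁻ z, U z ∂μ ≠ ⊤ := by
    intro μ h1
    exact (BoundedContinuousFunction.lintegral_lt_top_of_nnreal μ U).ne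
  -- existence of a minimizer of F
  obtain ⟨P₀, hP₀D, hP₀min⟩ : ∃ P ∈ {P : ProbabilityMeasure ℂ | ∀ _ : ℕ, P Dᶜ ≤ 0},
      IsMinOn (fun P : ProbabilityMeasure ℂ => F (P : Measure ℂ))
        {P : ProbabilityMeasure ℂ | ∀ _ : ℕ, P Dᶜ ≤ 0} P := by
    apply LowerSemicontinuousOn.exists_isMinOn
    · obtain ⟨μ, h1, h2, -⟩ := exists_finite hD hDpos hR hDR
      exact ⟨⟨μ, h1⟩, fun _ => le_of_eq
        ((ProbabilityMeasure.null_iff_toMeasure_null ⟨μ, h1⟩ Dᶜ).mpr h2)⟩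
    · exact isCompact_setOfPred_probabilityMeasure_mass_eq_compl_isCompact_le
        (u := fun _ => 0) (K := fun _ => D) tendsto_const_nhds (fun _ => hD)
        (Or.inl inferInstance)
    · exact (F_lsc hR U).lowerSemicontinuousOn _
  have hmin : ∀ μ : Measure ℂ, IsProbabilityMeasure μ → μ Dᶜ = 0 → F P₀ ≤ F μ := by
    intro μ h1 h2
    have hm : (⟨μ, h1⟩ : ProbabilityMeasure ℂ) ∈
        {P : ProbabilityMeasure ℂ | ∀ _ : ℕ, P Dᶜ ≤ 0} := by
      exact fun _ => le_of_eq ((ProbabilityMeasure.null_iff_toMeasure_null ⟨μ, h1⟩ Dᶜ).mpr h2)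
    exact hP₀min hm
  have hP₀D' : (P₀ : Measure ℂ) Dᶜ = 0 := by
    have := hP₀D 0
    rwa [nonpos_iff_eq_zero, ProbabilityMeasure.null_iff_toMeasure_null] at this
  have hfin : F P₀ ≠ ⊤ := by
    obtain ⟨μ, h1, h2, h3⟩ := exists_finite hD hDpos hR hDR
    exact ne_top_of_le_ne_top (ENNReal.add_ne_top.mpr ⟨hUfin μ h1, h3⟩) (hmin μ h1 h2)
  have hatom : ∀ z, (P₀ : Measure ℂ) {z} = 0 :=
    atomless_of_finite hR _ (ENNReal.add_ne_top.mp hfin).2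
  refine ⟨P₀, ⟨⟨inferInstance, hP₀D', hatom⟩, ?_⟩, ?_⟩
  · intro μ h1 h2 h3
    rw [hbr μ h1 h2 h3, hbr P₀ inferInstance hP₀D' hatom]
    exact EReal.sub_le_sub (EReal.coe_ennreal_le_coe_ennreal_iff.mpr (hmin μ h1 h2)) le_rfl
  · rintro ν ⟨⟨hν1, hν2, hν3⟩, hν4⟩
    by_contra hne
    have hle : F ν ≤ F P₀ := by
      have h := hν4 P₀ inferInstance hP₀D' hatom
      rw [hbr ν hν1 hν2 hν3, hbr P₀ inferInstance hP₀D' hatom] at h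
      have h' := add_le_add_left h ((C + Real.log R : ℝ) : EReal)
      rw [EReal.sub_add_cancel, EReal.sub_add_cancel] at h'
      exact EReal.coe_ennreal_le_coe_ennreal_iff.mp h'
    have hνfin : F ν ≠ ⊤ := ne_top_of_le_ne_top hfin hle
    have hLν := (ENNReal.add_ne_top.mp hνfin).2
    have hLP := (ENNReal.add_ne_top.mp hfin).2
    have hst := LK_strict hR hDR ν P₀ hν2 hP₀D' hν3 hatom hLν hLP hne
    have hmp : IsProbabilityMeasure ((2 : ENNReal)⁻¹ • (ν + (P₀ : Measure ℂ))) := by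
      constructor
      simp only [Measure.smul_apply, Measure.add_apply, measure_univ, smul_eq_mul]
      rw [one_add_one_eq_two]
      exact ENNReal.inv_mul_cancel (by simp) (by simp)
    have hmD : ((2 : ENNReal)⁻¹ • (ν + (P₀ : Measure ℂ))) Dᶜ = 0 := by
      simp [hν2, hP₀D']
    have h1 := hmin _ hmp hmD
    have h2 := half_energy (R := R) U ν P₀
    have h3 : 4 * F P₀ ≤ 4 * F ((2 : ENNReal)⁻¹ • (ν + (P₀ : Measure ℂ))) := by gcongr
    have h4 : 4 * F ((2 : ENNReal)⁻¹ • (ν + (P₀ : Measure ℂ))) < 2 * F ν + 2 * F P₀ := by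
      simp only [F]
      rw [h2]
      have hUν := hUfin ν hν1
      have hUP := hUfin P₀ inferInstance
      calc _ < 2 * (∫⁻ z, U z ∂ν) + 2 * (∫⁻ z, U z ∂(P₀ : Measure ℂ)) +
            ((∫⁻ p, LK R p ∂(ν.prod ν)) + (∫⁻ p, LK R p ∂((P₀ : Measure ℂ).prod P₀)) +
            ((∫⁻ p, LK R p ∂(ν.prod ν)) + (∫⁻ p, LK R p ∂((P₀ : Measure ℂ).prod P₀)))) := by
            apply ENNReal.add_lt_add_left
            · exact ENNReal.add_ne_top.mpr ⟨ENNReal.mul_ne_top (by simp) hUν,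
                ENNReal.mul_ne_top (by simp) hUP⟩
            · exact ENNReal.add_lt_add_left (ENNReal.add_ne_top.mpr ⟨hLν, hLP⟩) hst
        _ = _ := by ring
    have h5 : 2 * F ν + 2 * F P₀ ≤ 4 * F P₀ := by
      calc 2 * F ν + 2 * F P₀ ≤ 2 * F P₀ + 2 * F P₀ := by gcongr
        _ = 4 * F P₀ := by ring
    exact absurd (h3.trans_lt (h4.trans_le h5)) (lt_irrefl _)
end

section
/- Let γ be the polynomial curve with exterior harmonic moments (t_k) and area πt₀, interior domain D₊, and V(z) = (1/t₀)(|z|² − 2Re Σ_{k=1}^{d+1} t_k z^k). Then E(z) = V(z) + (2/(πt₀)) ∫_{D₊} log|z/ζ − 1|^{-1} d²ζ vanishes identically on D₊, and on the exterior of γ (within the annular domain of the Schwarz reflection) its Wirtinger derivative is ∂_{z̄} E(z) = (z − ρ(z))/t₀, where ρ is the Schwarz reflection of γ. -/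
open Complex MeasureTheory Filter Topology

lemma aux_clopen {α : Type*} [TopologicalSpace α] {S : Set α} (hS : IsPreconnected S) (P : α → Prop)
    (h1 : ∀ x ∈ S, P x → ∀ᶠ y in 𝓝[S] x, P y)
    (h2 : ∀ x ∈ S, ¬ P x → ∀ᶠ y in 𝓝[S] x, ¬ P y)
    (hne : ∃ x ∈ S, P x) : ∀ x ∈ S, P x := by
  have : PreconnectedSpace S := Subtype.preconnectedSpace hS
  have hcl : IsClopen {x : S | P x} := by
    constructor
    · rw [← isOpen_compl_iff, isOpen_iff_mem_nhds]
      intro x hx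
      have := h2 x x.2 hx
      rw [nhdsWithin_eq_map_subtype_coe x.2] at this
      exact this
    · rw [isOpen_iff_mem_nhds]
      intro x hx
      have := h1 x x.2 hx
      rw [nhdsWithin_eq_map_subtype_coe x.2] at this
      exact this
  obtain ⟨x, hx, hPx⟩ := hne
  have := hcl.eq_univ ⟨⟨x, hx⟩, hPx⟩
  intro y hy
  have : (⟨y, hy⟩ : S) ∈ {x : S | P x} := by rw [this]; trivial
  exact this

lemma aux_injOn {h : ℂ → ℂ} {h' a : ℂ} (hs : HasStrictDerivAt h h' a) (h0 : h' ≠ 0) :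
    ∃ s, a ∈ s ∧ IsOpen s ∧ Set.InjOn h s := by
  obtain ⟨s, has, hso, hap⟩ :=
    (hs.hasStrictFDerivAt_equiv h0).approximates_deriv_on_open_nhds
  refine ⟨s, has, hso, hap.injOn ?_⟩
  right
  apply NNReal.half_lt_self
  have := (ContinuousLinearEquiv.unitsEquivAut ℂ (Units.mk0 h' h0)).nnnorm_symm_pos
  exact (inv_pos.mpr this).ne'

/-- exterior closed -/
abbrev extc : Set ℂ := {w : ℂ | 1 ≤ ‖w‖}
abbrev exto : Set ℂ := {w : ℂ | 1 < ‖w‖}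

lemma extc_conn : IsPreconnected extc := by
  have : extc = Complex.exp '' {s : ℂ | 0 ≤ s.re} := by
    ext w
    constructor
    · intro hw
      have hw0 : w ≠ 0 := by
        rintro rfl; simp [extc] at hw; linarith
      refine ⟨Complex.log w, ?_, Complex.exp_log hw0⟩
      simp only [Set.mem_ofPred_eq, Complex.log_re]
      exact Real.log_nonneg hw
    · rintro ⟨s, hs, rfl⟩
      simp only [extc, Set.mem_ofPred_eq, Complex.norm_exp] at hs ⊢
      exact Real.one_le_exp hs
  rw [this]
  exact ((convex_halfSpace_re_ge 0).isPreconnected).image _ Complex.continuous_exp.continuousOn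

lemma exto_conn : IsPreconnected exto := by
  have : exto = Complex.exp '' {s : ℂ | 0 < s.re} := by
    ext w
    constructor
    · intro hw
      have hw0 : w ≠ 0 := by
        rintro rfl; simp [exto] at hw; linarith
      refine ⟨Complex.log w, ?_, Complex.exp_log hw0⟩
      simp only [Set.mem_ofPred_eq, Complex.log_re]
      exact Real.log_pos hw
    · rintro ⟨s, hs, rfl⟩
      simp only [exto, Set.mem_ofPred_eq, Complex.norm_exp] at hs ⊢
      exact Real.one_lt_exp_iff.mpr hs
  rw [this]
  exact ((convex_halfSpace_re_gt 0).isPreconnected).image _ Complex.continuous_exp.continuousOn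

lemma extc_closed : IsClosed extc := isClosed_le continuous_const continuous_norm
lemma exto_open : IsOpen exto := isOpen_lt continuous_const continuous_norm

lemma aux_closed {h : ℂ → ℂ} (hc : ContinuousOn h extc)
    (hp : Tendsto h (cocompact ℂ) (cocompact ℂ)) {Y : Set ℂ} (hY : IsClosed Y) (hYX : Y ⊆ extc) :
    IsClosed (h '' Y) := by
  have h1 : Continuous (Y.domRestrict h) := continuousOn_iff_continuous_domRestrict.mp (hc.mono hYX)
  have h2 : Tendsto (Y.domRestrict h) (cocompact Y) (cocompact ℂ) :=
    hp.comp hY.isClosedEmbedding_subtypeVal.tendsto_cocompact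
  have h3 : IsProperMap (Y.domRestrict h) := isProperMap_iff_tendsto_cocompact.mpr ⟨h1, h2⟩
  have := h3.isClosedMap.isClosed_range
  rwa [Set.range_domRestrict] at this

lemma aux_P {h : ℂ → ℂ} (hs : ∀ w ∈ extc, HasStrictDerivAt h (deriv h w) w)
    (hderiv : ∀ w ∈ extc, deriv h w ≠ 0)
    (hp : Tendsto h (cocompact ℂ) (cocompact ℂ)) {w0 : ℂ} (hw0 : w0 ∈ extc)
    (huniq : ∀ w' ∈ extc, h w' = h w0 → w' = w0) :
    ∀ᶠ w in 𝓝 w0, ∀ w' ∈ extc, h w' = h w → w' = w := by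
  obtain ⟨U, haU, hUo, hUi⟩ := aux_injOn (hs w0 hw0) (hderiv w0 hw0)
  have hc : ContinuousOn h extc := fun w hw => (hs w hw).hasDerivAt.continuousAt.continuousWithinAt
  have hcl : IsClosed (h '' (extc \ U)) :=
    aux_closed hc hp (extc_closed.sdiff hUo) Set.sdiff_subset
  have hn : h w0 ∈ (h '' (extc \ U))ᶜ := by
    rintro ⟨w', ⟨h1, h2⟩, h3⟩
    rw [huniq w' h1 h3] at h2
    exact h2 haU
  have h1 : ∀ᶠ w in 𝓝 w0, h w ∈ (h '' (extc \ U))ᶜ :=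
    (hs w0 hw0).hasDerivAt.continuousAt (hcl.isOpen_compl.mem_nhds hn)
  filter_upwards [h1, hUo.mem_nhds haU] with w hw1 hw2 w' hw' he
  have : w' ∈ U := by
    by_contra hcon
    exact hw1 ⟨w', ⟨hw', hcon⟩, he⟩
  exact hUi this hw2 he

lemma aux_Op {h : ℂ → ℂ} (hs : ∀ w ∈ extc, HasStrictDerivAt h (deriv h w) w)
    (hderiv : ∀ w ∈ extc, deriv h w ≠ 0) {w0 w1 : ℂ} (hw0 : w0 ∈ extc) (hw1 : w1 ∈ exto)
    (hne : w1 ≠ w0) (heq : h w1 = h w0) :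
    ∀ᶠ w in 𝓝 w0, ∃ w' ∈ exto, w' ≠ w ∧ h w' = h w := by
  have hw1' : w1 ∈ extc := (show 1 ≤ ‖w1‖ from le_of_lt hw1)
  obtain ⟨U, V, hU, hV, h1, h0, hd⟩ := t2_separation hne
  have : h '' (U ∩ exto) ∈ 𝓝 (h w0) := by
    rw [← heq, ← (hs w1 hw1').map_nhds_eq (hderiv w1 hw1')]
    exact image_mem_map ((hU.inter exto_open).mem_nhds ⟨h1, hw1⟩)
  filter_upwards [(hs w0 hw0).hasDerivAt.continuousAt this, hV.mem_nhds h0] with w hw hwV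
  obtain ⟨w', ⟨hU', ho⟩, he⟩ := hw
  refine ⟨w', ho, ?_, he⟩
  rintro rfl
  exact Set.disjoint_left.mp hd hU' hwV

lemma aux_open_image {h : ℂ → ℂ} (hs : ∀ w ∈ extc, HasStrictDerivAt h (deriv h w) w)
    (hderiv : ∀ w ∈ extc, deriv h w ≠ 0) : IsOpen (h '' exto) := by
  rw [isOpen_iff_mem_nhds]
  rintro _ ⟨w, hw, rfl⟩
  have hw' : w ∈ extc := (show 1 ≤ ‖w‖ from le_of_lt hw)
  rw [← (hs w hw').map_nhds_eq (hderiv w hw')]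
  exact image_mem_map (exto_open.mem_nhds hw)

lemma extc_eq : extc = exto ∪ Metric.sphere 0 1 := by
  ext w
  simp only [extc, exto, Set.mem_ofPred_eq, Set.mem_union, mem_sphere_zero_iff_norm]
  rw [le_iff_lt_or_eq, eq_comm]

lemma sphere_conn : IsPreconnected (Metric.sphere (0 : ℂ) 1) :=
  isPreconnected_sphere (by simp) 0 1

lemma aux_inj {h : ℂ → ℂ} (hs : ∀ w ∈ extc, HasStrictDerivAt h (deriv h w) w)
    (hderiv : ∀ w ∈ extc, deriv h w ≠ 0)
    (hp : Tendsto h (cocompact ℂ) (cocompact ℂ))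
    (hinj : Set.InjOn h (Metric.sphere (0 : ℂ) 1))
    (hne : ∀ w ∈ extc, h w ≠ 0) : Set.InjOn h extc := by
  have hc : ContinuousOn h extc := fun w hw => (hs w hw).hasDerivAt.continuousAt.continuousWithinAt
  have hsub : Metric.sphere (0 : ℂ) 1 ⊆ extc := by rw [extc_eq]; exact Set.subset_union_right
  have hsub2 : exto ⊆ extc := by rw [extc_eq]; exact Set.subset_union_left
  have step1 : ∀ w ∈ Metric.sphere (0 : ℂ) 1, ¬ ∃ w' ∈ extc, w' ≠ w ∧ h w' = h w := by
    by_contra hcon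
    push Not at hcon
    have hall : ∀ w ∈ Metric.sphere (0 : ℂ) 1, ∃ w' ∈ extc, w' ≠ w ∧ h w' = h w := by
      apply aux_clopen sphere_conn
      · rintro x hx ⟨w', hw', hn, he⟩
        have ho : w' ∈ exto := by
          rw [extc_eq] at hw'
          rcases hw' with hw' | hw'
          · exact hw'
          · exact absurd (hinj hw' hx he) hn
        have := aux_Op hs hderiv (hsub hx) ho hn he
        apply nhdsWithin_le_nhds
        filter_upwards [this] with y hy
        obtain ⟨w', h1, h2⟩ := hy
        exact ⟨w', hsub2 h1, h2⟩
      · intro x hx hn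
        push Not at hn
        have := aux_P hs hderiv hp (hsub hx) (fun w' hw' he => by
          by_contra hh
          exact hn w' hw' hh he)
        apply nhdsWithin_le_nhds
        filter_upwards [this] with y hy
        push Not
        intro w' hw' hne he
        exact hne (hy w' hw' he)
      · exact hcon
    have himg : h '' extc = h '' exto := by
      apply subset_antisymm
      · rw [extc_eq, Set.image_union]
        apply Set.union_subset le_rfl
        rintro _ ⟨w, hw, rfl⟩
        obtain ⟨w', hw', hn, he⟩ := hall w hw
        rw [extc_eq] at hw'
        rcases hw' with hw' | hw'
        · exact ⟨w', hw', he⟩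
        · exact absurd (hinj hw' hw he) hn
      · exact Set.image_mono hsub2
    have hclopen : IsClopen (h '' extc) :=
      ⟨aux_closed hc hp extc_closed le_rfl, himg ▸ aux_open_image hs hderiv⟩
    have hun := hclopen.eq_univ ⟨h 1, 1, by simp, rfl⟩
    have : (0 : ℂ) ∈ h '' extc := by rw [hun]; trivial
    obtain ⟨w, hw, h0⟩ := this
    exact hne w hw h0
  have step2 : ∀ w ∈ extc, ¬ ∃ w' ∈ extc, w' ≠ w ∧ h w' = h w := by
    apply aux_clopen extc_conn
    · intro x hx hn
      push Not at hn
      have := aux_P hs hderiv hp hx (fun w' hw' he => by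
        by_contra hh
        exact hn w' hw' hh he)
      apply nhdsWithin_le_nhds
      filter_upwards [this] with y hy
      push Not
      intro w' hw' hne he
      exact hne (hy w' hw' he)
    · intro x hx hn
      push Not at hn
      obtain ⟨w', hw', hn, he⟩ := hn
      have ho : w' ∈ exto := by
        have hw'' := hw'
        rw [extc_eq] at hw''
        rcases hw'' with hw'' | hw''
        · exact hw''
        · exact absurd ⟨x, hx, hn.symm, he.symm⟩ (step1 w' hw'')
      have := aux_Op hs hderiv hx ho hn he
      apply nhdsWithin_le_nhds
      filter_upwards [this] with y hy
      push Not
      obtain ⟨w', h1, h2⟩ := hy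
      exact ⟨w', hsub2 h1, h2⟩
    · exact ⟨1, by simp, step1 1 (by simp)⟩
  intro x hx y hy he
  by_contra hn
  exact step2 y hy ⟨x, hx, hn, he⟩

/-- local inner side -/
lemma aux_loc {h : ℂ → ℂ} (hs : ∀ w ∈ extc, HasStrictDerivAt h (deriv h w) w)
    (hderiv : ∀ w ∈ extc, deriv h w ≠ 0)
    (hp : Tendsto h (cocompact ℂ) (cocompact ℂ))
    (hinj : Set.InjOn h extc) {w0 : ℂ} (hw0 : w0 ∈ extc) :
    ∃ ε > 0, ε ≤ 1 ∧ ∀ w ∈ Metric.ball w0 ε, w ∉ extc → h w ∉ h '' extc := by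
  have := aux_P hs hderiv hp hw0 (fun w' hw' he => hinj hw' hw0 he)
  rw [Metric.eventually_nhds_iff_ball] at this
  obtain ⟨ε, hε, hb⟩ := this
  refine ⟨min ε 1, by positivity, min_le_right _ _, ?_⟩
  rintro w hw hwX ⟨w', hw', he⟩
  have := hb w (Metric.ball_subset_ball (min_le_left _ _) hw) w' hw' he
  rw [← this] at hwX
  exact hwX hw'

lemma aux_conn {h : ℂ → ℂ} (hs : ∀ w ∈ extc, HasStrictDerivAt h (deriv h w) w)
    (hcont : ∀ w ≠ 0, ContinuousAt h w)
    (hderiv : ∀ w ∈ extc, deriv h w ≠ 0)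
    {A : Set ℂ} (hA : IsOpen A) (hAne : A.Nonempty) (hAu : A ≠ Set.univ)
    (hAK : ∀ z ∈ A, z ∉ h '' extc) (hfr : frontier A ⊆ h '' Metric.sphere 0 1)
    (hsub : Metric.sphere (0 : ℂ) 1 ⊆ extc)
    (ε : ℂ → ℝ)
    (hε : ∀ w ∈ Metric.sphere (0 : ℂ) 1, 0 < ε w ∧ ε w ≤ 1 ∧
      ∀ w' ∈ Metric.ball w (ε w), w' ∉ extc → h w' ∉ h '' extc) :
    ∀ w ∈ Metric.sphere (0 : ℂ) 1, h '' (Metric.ball w (ε w) ∩ Metric.ball 0 1) ⊆ A := by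
  have hnx : ∀ w : ℂ, w ∈ Metric.ball (0 : ℂ) 1 ↔ w ∉ extc := by
    intro w
    simp [extc]
  have key : ∀ w ∈ Metric.sphere (0 : ℂ) 1, h w ∈ closure A →
      h '' (Metric.ball w (ε w) ∩ Metric.ball 0 1) ⊆ A := by
    intro w hw hcl
    obtain ⟨h1, h2, h3⟩ := hε w hw
    have hnb : h '' Metric.ball w (ε w) ∈ 𝓝 (h w) := by
      rw [← (hs w (hsub hw)).map_nhds_eq (hderiv w (hsub hw))]
      exact image_mem_map (Metric.ball_mem_nhds _ h1)
    obtain ⟨z, ⟨w1, hw1, rfl⟩, hzA⟩ := mem_closure_iff_nhds.mp hcl _ hnb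
    have hw1' : w1 ∈ Metric.ball (0 : ℂ) 1 := by
      rw [hnx]
      intro hX
      exact hAK _ hzA ⟨w1, hX, rfl⟩
    have hconn : IsPreconnected (h '' (Metric.ball w (ε w) ∩ Metric.ball 0 1)) := by
      apply (((convex_ball _ _).inter (convex_ball _ _)).isPreconnected).image
      intro x hx
      apply (hcont x _).continuousWithinAt
      rintro rfl
      have h4 := hx.1
      rw [Metric.mem_ball, dist_comm, dist_zero_right] at h4
      rw [mem_sphere_zero_iff_norm] at hw
      linarith
    have hd : h '' (Metric.ball w (ε w) ∩ Metric.ball 0 1) ⊆ A ∪ (closure A)ᶜ := by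
      rintro _ ⟨x, hx, rfl⟩
      by_contra hcon
      simp only [Set.mem_union, Set.mem_compl_iff, not_or, not_not] at hcon
      have : h x ∈ frontier A := by
        rw [hA.frontier_eq]; exact ⟨hcon.2, hcon.1⟩
      exact h3 x hx.1 ((hnx x).mp hx.2) (Set.image_mono hsub (hfr this))
    rcases hconn.subset_or_subset hA isClosed_closure.isOpen_compl
      (Set.disjoint_left.mpr fun x hx hx' => hx' (subset_closure hx)) hd with h5 | h5
    · exact h5
    · exact absurd (subset_closure hzA) (h5 ⟨w1, ⟨hw1, hw1'⟩, rfl⟩)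
  have hall : ∀ w ∈ Metric.sphere (0 : ℂ) 1, h w ∈ closure A := by
    apply aux_clopen sphere_conn
    · intro w hw hcl
      have hk := key w hw hcl
      filter_upwards [self_mem_nhdsWithin,
        nhdsWithin_le_nhds (Metric.ball_mem_nhds w (hε w hw).1)] with y hyS hyB
      have hy1 : y ∈ closure (Metric.ball w (ε w) ∩ Metric.ball 0 1) := by
        apply Metric.isOpen_ball.inter_closure
        refine ⟨hyB, ?_⟩
        rw [closure_ball _ one_ne_zero]
        exact Metric.sphere_subset_closedBall hyS
      exact closure_mono hk (mem_closure_image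
        (hs y (hsub hyS)).hasDerivAt.continuousAt hy1)
    · intro w hw hcl
      apply nhdsWithin_le_nhds
      exact (hs w (hsub hw)).hasDerivAt.continuousAt (isClosed_closure.isOpen_compl.mem_nhds hcl)
    · obtain ⟨z, hz⟩ := nonempty_frontier_iff.mpr ⟨hAne, hAu⟩
      obtain ⟨w, hw, rfl⟩ := hfr hz
      exact ⟨w, hw, frontier_subset_closure hz⟩
  exact fun w hw => key w hw (hall w hw)

lemma aux_top {h : ℂ → ℂ} (hs : ∀ w ∈ extc, HasStrictDerivAt h (deriv h w) w)
    (hcont : ∀ w ≠ 0, ContinuousAt h w)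
    (hderiv : ∀ w ∈ extc, deriv h w ≠ 0)
    (hp : Tendsto h (cocompact ℂ) (cocompact ℂ))
    (hinj : Set.InjOn h (Metric.sphere (0 : ℂ) 1))
    (hne : ∀ w ∈ extc, h w ≠ 0)
    {Dp : Set ℂ} (hDpo : IsOpen Dp) (hDpb : Bornology.IsBounded Dp)
    (h0 : (0 : ℂ) ∈ Dp) (hfr : frontier Dp = h '' Metric.sphere (0 : ℂ) 1) :
    Dp = (h '' extc)ᶜ ∧ IsPreconnected Dp ∧ Set.InjOn h extc := by
  have hc : ContinuousOn h extc := fun w hw => (hs w hw).hasDerivAt.continuousAt.continuousWithinAt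
  have hsub : Metric.sphere (0 : ℂ) 1 ⊆ extc := by rw [extc_eq]; exact Set.subset_union_right
  have hsub2 : exto ⊆ extc := by rw [extc_eq]; exact Set.subset_union_left
  have hI := aux_inj hs hderiv hp hinj hne
  have hOo := aux_open_image hs hderiv
  have hXc : IsClosed (h '' extc) := aux_closed hc hp extc_closed le_rfl
  choose! ε hε using fun (w : ℂ) (hw : w ∈ Metric.sphere (0 : ℂ) 1) =>
    aux_loc hs hderiv hp hI (hsub hw)
  have hdisj : ∀ z ∈ h '' exto, z ∉ frontier Dp := by
    rintro _ ⟨w, hw, rfl⟩ hz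
    rw [hfr] at hz
    obtain ⟨w', hw', he⟩ := hz
    have := hI (hsub hw') (hsub2 hw) he
    rw [this, mem_sphere_zero_iff_norm] at hw'
    have hw2 : 1 < ‖w‖ := hw
    linarith
  have hO : ∀ z ∈ h '' exto, z ∉ Dp := by
    have hconn : IsPreconnected (h '' exto) := exto_conn.image _ (hc.mono hsub2)
    have hd : h '' exto ⊆ Dp ∪ (closure Dp)ᶜ := by
      intro x hx
      by_contra hcon
      simp only [Set.mem_union, Set.mem_compl_iff, not_or, not_not] at hcon
      have : x ∈ frontier Dp := by
        rw [hDpo.frontier_eq]; exact ⟨hcon.2, hcon.1⟩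
      exact hdisj x hx this
    rcases hconn.subset_or_subset hDpo isClosed_closure.isOpen_compl
      (Set.disjoint_left.mpr fun x hx hx' => hx' (subset_closure hx)) hd with h5 | h5
    · exfalso
      have h6 : ∀ᶠ w in cocompact ℂ, h w ∉ closure Dp :=
        hp hDpb.isCompact_closure.compl_mem_cocompact
      have h7 : ∀ᶠ w in cocompact ℂ, 1 < ‖w‖ :=
        (tendsto_norm_cocompact_atTop (E := ℂ)).eventually_gt_atTop 1
      obtain ⟨w, hw1, hw2⟩ := (h6.and h7).exists
      exact hw1 (subset_closure (h5 ⟨w, hw2, rfl⟩))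
    · intro z hz hzD
      exact h5 hz (subset_closure hzD)
  have hDK : ∀ z ∈ Dp, z ∉ h '' extc := by
    intro z hz hzX
    rw [extc_eq, Set.image_union, ← hfr, hDpo.frontier_eq] at hzX
    rcases hzX with h1 | h1
    · exact hO z h1 hz
    · exact h1.2 hz
  have hin : ∀ w ∈ Metric.sphere (0 : ℂ) 1,
      (h '' (Metric.ball w (ε w) ∩ Metric.ball 0 1)).Nonempty := by
    intro w hw
    apply Set.Nonempty.image
    have : w ∈ closure (Metric.ball (0 : ℂ) 1) := by
      rw [closure_ball _ one_ne_zero]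
      exact Metric.sphere_subset_closedBall hw
    exact mem_closure_iff_nhds.mp this _ (Metric.ball_mem_nhds _ (hε w hw).1)
  -- two disjoint sets are impossible
  have htwo : ∀ A B : Set ℂ, IsOpen A → IsOpen B → A.Nonempty → B.Nonempty → Disjoint A B →
      (∀ z ∈ A, z ∉ h '' extc) → (∀ z ∈ B, z ∉ h '' extc) →
      frontier A ⊆ h '' Metric.sphere 0 1 → frontier B ⊆ h '' Metric.sphere 0 1 → False := by
    intro A B hA hB hAn hBn hAB hAK hBK hAf hBf
    have hAu : A ≠ Set.univ := by
      rintro rfl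
      obtain ⟨b, hb⟩ := hBn
      exact Set.disjoint_left.mp hAB trivial hb
    have hBu : B ≠ Set.univ := by
      rintro rfl
      obtain ⟨b, hb⟩ := hAn
      exact Set.disjoint_left.mp hAB hb trivial
    have h1 := aux_conn hs hcont hderiv hA hAn hAu hAK hAf hsub ε hε 1 (by simp)
    have h2 := aux_conn hs hcont hderiv hB hBn hBu hBK hBf hsub ε hε 1 (by simp)
    obtain ⟨z, hz⟩ := hin 1 (by simp)
    exact Set.disjoint_left.mp hAB (h1 hz) (h2 hz)
  have hfrK : frontier ((h '' extc)ᶜ) ⊆ h '' Metric.sphere 0 1 := by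
    rw [frontier_compl, frontier, hXc.closure_eq]
    rintro z ⟨hz1, hz2⟩
    rw [extc_eq, Set.image_union] at hz1
    rcases hz1 with h1 | h1
    · exact absurd (interior_maximal (Set.image_mono hsub2) hOo h1) hz2
    · exact h1
  refine ⟨?_, ?_, hI⟩
  · apply subset_antisymm hDK
    by_contra hcon
    rw [Set.not_subset] at hcon
    obtain ⟨z, hz1, hz2⟩ := hcon
    apply htwo Dp ((h '' extc)ᶜ ∩ (closure Dp)ᶜ) hDpo
      (hXc.isOpen_compl.inter isClosed_closure.isOpen_compl) ⟨0, h0⟩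
    · refine ⟨z, hz1, ?_⟩
      intro hzc
      have : z ∈ frontier Dp := by rw [hDpo.frontier_eq]; exact ⟨hzc, hz2⟩
      rw [hfr] at this
      exact hz1 (Set.image_mono hsub this)
    · exact Set.disjoint_left.mpr fun x hx hx' => hx'.2 (subset_closure hx)
    · exact hDK
    · exact fun z hz => hz.1
    · exact hfr.le
    · refine (frontier_inter_subset _ _).trans ?_
      apply Set.union_subset
      · exact Set.inter_subset_left.trans hfrK
      · refine Set.inter_subset_right.trans ?_
        rw [frontier_compl]
        exact frontier_closure_subset.trans hfr.le
  · have hfA : ∀ u v : Set ℂ, IsOpen u → IsOpen v → Dp ⊆ u ∪ v → ¬ (Dp ∩ (u ∩ v)).Nonempty →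
        frontier (Dp ∩ u) ⊆ h '' Metric.sphere 0 1 := by
      intro u v hu hv huv hn x hx
      rw [← hfr, hDpo.frontier_eq]
      rw [(hDpo.inter hu).frontier_eq] at hx
      refine ⟨closure_mono Set.inter_subset_left hx.1, fun hxD => ?_⟩
      have hxv : x ∈ v := by
        rcases huv hxD with h1 | h1
        · exact absurd ⟨hxD, h1⟩ hx.2
        · exact h1
      obtain ⟨y, hy1, hy2⟩ := mem_closure_iff_nhds.mp hx.1 v (hv.mem_nhds hxv)
      exact hn ⟨y, hy2.1, hy2.2, hy1⟩
    intro u v hu hv huv hnu hnv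
    by_contra hn
    refine htwo (Dp ∩ u) (Dp ∩ v) (hDpo.inter hu) (hDpo.inter hv) hnu hnv ?_
      (fun z hz => hDK z hz.1) (fun z hz => hDK z hz.1) (hfA u v hu hv huv hn)
      (hfA v u hv hu (by rwa [Set.union_comm]) (by rwa [Set.inter_comm v u]))
    exact Set.disjoint_left.mpr fun x hx hx' => hn ⟨x, hx.1, hx.2, hx'.2⟩

noncomputable def dbar (F : ℂ → ℂ) (z : ℂ) : ℂ :=
  (1 / 2 : ℂ) * (fderiv ℝ F z 1 + I * fderiv ℝ F z I)

lemma aux_wirt (L : ℂ →L[ℝ] ℂ) (a : ℂ) :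
    I * L a - L (a * I) = I * (starRingEnd ℂ a) * (L 1 + I * L I) := by
  have h1 : ∀ b : ℂ, L b = b.re * L 1 + b.im * L I := by
    intro b
    have : b = b.re • (1 : ℂ) + b.im • I := by simp [Complex.re_add_im]
    conv_lhs => rw [this]
    rw [map_add, map_smul, map_smul]
    simp
  rw [h1 a, h1 (a * I)]
  have h3 : starRingEnd ℂ a = a.re - a.im * I := by
    apply Complex.ext <;> simp
  rw [h3]
  simp only [mul_re, I_re, I_im, mul_im]
  push_cast
  linear_combination (a.im * L 1 + I * a.im * L I - a.re * L I) * I_sq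

lemma aux_det (a : ℂ) :
    |((ContinuousLinearMap.toSpanSingleton ℂ a).restrictScalars ℝ : ℂ →L[ℝ] ℂ).det| = normSq a := by
  simp [ContinuousLinearMap.det, LinearMap.det_restrictScalars, Algebra.norm_complex_eq,
    Complex.normSq_nonneg]

lemma green_strip {h : ℂ → ℂ} (hd : ∀ w ≠ 0, DifferentiableAt ℂ h w)
    (hp : Tendsto h (cocompact ℂ) (cocompact ℂ))
    (hinj : Set.InjOn h exto) (hOm : MeasurableSet (h '' exto)) {F : ℂ → ℂ} (hF : ContDiff ℝ 1 F) (hFc : HasCompactSupport F) :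
    ∫ z in h '' exto, dbar F z = - ((2 * I)⁻¹ * ∮ w in C(0, 1), F (h w) * deriv h w) := by
  -- choose T
  have h1 : ∀ᶠ w in cocompact ℂ, h w ∉ tsupport F := hp hFc.isCompact.compl_mem_cocompact
  obtain ⟨M, hM⟩ : ∃ M : ℝ, ∀ w : ℂ, M ≤ ‖w‖ → h w ∉ tsupport F := by
    rw [← Metric.cobounded_eq_cocompact, ← comap_norm_atTop, eventually_comap,
      eventually_atTop] at h1
    obtain ⟨M, hM⟩ := h1
    exact ⟨M, fun w hw => hM _ hw w rfl⟩
  obtain ⟨T, hT0, hTM⟩ : ∃ T : ℝ, 0 < T ∧ M ≤ Real.exp T :=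
    ⟨max 1 M, by positivity, by
      have := Real.add_one_le_exp (max 1 M)
      have := le_max_right 1 M
      linarith⟩
  set H : ℂ → ℂ := fun s => h (exp s) with hH
  set H' : ℂ → ℂ := fun s => deriv h (exp s) * exp s with hH'
  have hHd : ∀ s, HasDerivAt H (H' s) s := fun s =>
    (hd _ (exp_ne_zero s)).hasDerivAt.comp s (hasDerivAt_exp s)
  have hHdiff : Differentiable ℂ H := fun s => (hHd s).differentiableAt
  have hH'eq : H' = deriv H := by ext s; exact (hHd s).deriv.symm
  have hH'diff : Differentiable ℂ H' := by
    rw [hH'eq]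
    exact hHdiff.deriv
  have hH'c : Continuous H' := hH'diff.continuous
  have hHc : Continuous H := hHdiff.continuous
  have hFfd : Continuous (fderiv ℝ F) := hF.continuous_fderiv (by norm_num)
  have hdb : Continuous (dbar F) := by
    unfold dbar
    fun_prop
  have hdb0 : ∀ z, z ∉ tsupport F → dbar F z = 0 := by
    intro z hz
    have : fderiv ℝ F z = 0 := by
      by_contra hne
      exact hz (support_fderiv_subset ℝ hne)
    simp [dbar, this]
  set S : Set ℂ := Set.Ioc 0 T ×ℂ Set.Ioc (-Real.pi) Real.pi with hS
  have hSm : MeasurableSet S := (measurable_re measurableSet_Ioc).inter (measurable_im measurableSet_Ioc)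
  have hSsub : H '' S ⊆ h '' exto := by
    rintro _ ⟨s, hs, rfl⟩
    refine ⟨exp s, ?_, rfl⟩
    show 1 < ‖exp s‖
    rw [Complex.norm_exp]
    exact Real.one_lt_exp_iff.mpr hs.1.1
  have hHi : Set.InjOn H S := by
    intro s hs s' hs' he
    have h2 : exp s = exp s' := by
      apply hinj _ _ he
      · show 1 < ‖exp s‖
        rw [Complex.norm_exp]
        exact Real.one_lt_exp_iff.mpr hs.1.1
      · show 1 < ‖exp s'‖
        rw [Complex.norm_exp]
        exact Real.one_lt_exp_iff.mpr hs'.1.1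
    exact Complex.exp_inj_of_neg_pi_lt_of_le_pi hs.2.1 hs.2.2 hs'.2.1 hs'.2.2 h2
  have e1 : ∫ z in h '' exto, dbar F z = ∫ z in H '' S, dbar F z := by
    apply setIntegral_eq_of_subset_of_forall_sdiff_eq_zero hOm hSsub
    rintro _ ⟨⟨w, hw, rfl⟩, hn⟩
    apply hdb0
    apply hM
    by_contra hcon
    push Not at hcon
    have hw1 : 1 < ‖w‖ := hw
    have hw0 : w ≠ 0 := by
      rintro rfl; simp at hw1; linarith
    apply hn
    refine ⟨log w, ⟨⟨?_, ?_⟩, ?_, ?_⟩, by simp only [hH]; rw [exp_log hw0]⟩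
    · rw [log_re]; exact Real.log_pos hw1
    · rw [log_re, Real.log_le_iff_le_exp (by linarith)]
      linarith
    · exact neg_pi_lt_log_im w
    · exact log_im_le_pi w
  have e2 : ∫ z in H '' S, dbar F z = ∫ s in S, (normSq (H' s)) • dbar F (H s) := by
    rw [integral_image_eq_integral_abs_det_fderiv_smul volume hSm
      (fun s _ => ((hHd s).hasFDerivAt.restrictScalars ℝ).hasFDerivWithinAt) hHi]
    simp only [aux_det]
  have hqc : Continuous fun s => (normSq (H' s)) • dbar F (H s) :=
    (continuous_normSq.comp hH'c).smul (hdb.comp hHc)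
  have e3 : ∫ s in S, (normSq (H' s)) • dbar F (H s) =
      ∫ x in (0:ℝ)..T, ∫ y in (-Real.pi)..Real.pi,
        (normSq (H' (x + y * I))) • dbar F (H (x + y * I)) := by
    rw [← (volume_preserving_equiv_real_prod.symm _).setIntegral_preimage_emb
      (MeasurableEquiv.measurableEmbedding _)]
    have hpre : measurableEquivRealProd.symm ⁻¹' S = Set.Ioc 0 T ×ˢ Set.Ioc (-Real.pi) Real.pi := by
      ext p
      simp [hS, mem_reProdIm]
    rw [hpre, Measure.volume_eq_prod, setIntegral_prod]
    · rw [intervalIntegral.integral_of_le hT0.le]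
      apply setIntegral_congr_fun measurableSet_Ioc
      intro x _
      simp only
      rw [intervalIntegral.integral_of_le (by linarith [Real.pi_pos])]
      simp only [measurableEquivRealProd_symm_apply, mk_eq_add_mul_I]
    · apply IntegrableOn.mono_set (t := Set.Icc 0 T ×ˢ Set.Icc (-Real.pi) Real.pi)
      · apply ContinuousOn.integrableOn_compact (isCompact_Icc.prod isCompact_Icc)
        apply Continuous.continuousOn
        simp only [measurableEquivRealProd_symm_apply, mk_eq_add_mul_I]
        exact hqc.comp (by fun_prop)
      · exact Set.prod_mono Set.Ioc_subset_Icc_self Set.Ioc_subset_Icc_self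
  set G : ℂ → ℂ := fun s => F (H s) * H' s with hG
  set G' : ℂ → ℂ →L[ℝ] ℂ := fderiv ℝ G with hG'
  have hGd : ∀ s, HasFDerivAt G (F (H s) • ((ContinuousLinearMap.toSpanSingleton ℂ (deriv H' s)).restrictScalars ℝ : ℂ →L[ℝ] ℂ) + (H' s) • ((fderiv ℝ F (H s)).comp ((ContinuousLinearMap.toSpanSingleton ℂ (H' s)).restrictScalars ℝ))) s := by
    intro s
    have a1 : HasFDerivAt F (fderiv ℝ F (H s)) (H s) :=
      (hF.differentiable (by norm_num) _).hasFDerivAt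
    have a2 := a1.comp s ((hHd s).hasFDerivAt.restrictScalars ℝ)
    have a3 := (hH'diff s).hasDerivAt.hasFDerivAt.restrictScalars ℝ
    exact a2.mul a3
  have hkey : ∀ s, I • G' s 1 - G' s I = (2 * I) * ((normSq (H' s)) • dbar F (H s)) := by
    intro s
    rw [hG', (hGd s).fderiv]
    have := aux_wirt (fderiv ℝ F (H s)) (H' s)
    simp only [_root_.add_apply, _root_.smul_apply,
      ContinuousLinearMap.comp_apply, ContinuousLinearMap.coe_restrictScalars',
      ContinuousLinearMap.toSpanSingleton_apply, smul_eq_mul, one_mul, real_smul, dbar]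
    rw [normSq_eq_conj_mul_self]
    rw [mul_comm I (H' s)]
    linear_combination (H' s) * this
  have hrect := integral_boundary_rect_of_hasFDerivAt_real_off_countable G G'
    (((0 : ℝ) : ℂ) + ((-Real.pi : ℝ) : ℂ) * I) (((T : ℝ) : ℂ) + ((Real.pi : ℝ) : ℂ) * I) ∅
    Set.countable_empty ?_ ?_ ?_
  rotate_left
  · apply Continuous.continuousOn
    exact (hF.continuous.comp hHc).mul hH'c
  · intro s _
    exact (hGd s).differentiableAt.hasFDerivAt
  · simp only [hkey]
    apply ContinuousOn.integrableOn_compact (isCompact_uIcc.reProdIm isCompact_uIcc)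
    exact (continuous_const.mul hqc).continuousOn
  simp only [hkey] at hrect
  simp only [add_re, ofReal_re, mul_re, I_re, mul_zero, ofReal_im, I_im, mul_one, sub_self, add_zero,
    add_im, mul_im, zero_add] at hrect
  have hbt : ∀ x : ℝ, G (x + ((-Real.pi : ℝ) : ℂ) * I) = G (x + (Real.pi : ℂ) * I) := by
    intro x
    have : exp (x + ((-Real.pi : ℝ) : ℂ) * I) = exp (x + (Real.pi : ℂ) * I) := by
      rw [exp_eq_exp_iff_exists_int]
      exact ⟨-1, by push_cast; ring⟩
    simp only [hG, hH, hH', this]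
  have hr : ∀ y : ℝ, G (T + y * I) = 0 := by
    intro y
    have : F (H (T + y * I)) = 0 := by
      apply image_eq_zero_of_notMem_tsupport
      apply hM
      rw [Complex.norm_exp]
      simpa using hTM
    simp [hG, this]
  have hl : ∫ y in (-Real.pi)..Real.pi, G (((0 : ℝ) : ℂ) + y * I) =
      -I * ∮ w in C(0, 1), F (h w) * deriv h w := by
    have hper : Function.Periodic (fun y : ℝ => G (((0 : ℝ) : ℂ) + y * I)) (2 * Real.pi) := by
      intro y
      have : exp (((0 : ℝ) : ℂ) + ((y + 2 * Real.pi : ℝ) : ℂ) * I) =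
          exp (((0 : ℝ) : ℂ) + y * I) := by
        rw [exp_eq_exp_iff_exists_int]
        exact ⟨1, by push_cast; ring⟩
      simp only [hG, hH, hH', this]
    have h2 := hper.intervalIntegral_add_eq (-Real.pi) 0
    rw [show -Real.pi + 2 * Real.pi = Real.pi by ring, zero_add] at h2
    rw [h2, circleIntegral, ← intervalIntegral.integral_const_mul]
    apply intervalIntegral.integral_congr
    intro y _
    simp only [hG, hH, hH', circleMap, deriv_circleMap, smul_eq_mul]
    simp only [ofReal_zero, zero_add, ofReal_one, one_mul]
    linear_combination ((F (h (exp (y * I))) * (deriv h (exp (y * I)) * exp (y * I)))) * I_sq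
  simp only [hbt, hr, hl, sub_self, intervalIntegral.integral_zero, smul_zero] at hrect
  simp only [intervalIntegral.integral_const_mul] at hrect
  rw [e1, e2, e3]
  rw [smul_eq_mul] at hrect
  have hI : (2 * I : ℂ) ≠ 0 := by simp
  apply mul_left_cancel₀ hI
  rw [← hrect, mul_neg, mul_inv_cancel_left₀ hI]
  linear_combination (∮ w in C(0, 1), F (h w) * deriv h w) * I_sq

lemma integral_dbar_zero {F : ℂ → ℂ} (hF : ContDiff ℝ 1 F) (hFc : HasCompactSupport F) :
    ∫ z, dbar F z = 0 := by
  have hFfd : Continuous (fderiv ℝ F) := hF.continuous_fderiv (by norm_num)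
  have hinteg : ∀ v : ℂ, Integrable (fun z => fderiv ℝ F z v) := by
    intro v
    apply Continuous.integrable_of_hasCompactSupport (by fun_prop)
    exact hFc.fderiv_apply ℝ v
  have key : ∀ v : ℂ, ∫ z, fderiv ℝ F z v = 0 := by
    intro v
    have := integral_mul_fderiv_eq_neg_fderiv_mul_of_integrable (𝕜 := ℂ) (μ := (volume : Measure ℂ))
      (f := fun _ : ℂ => (1 : ℂ)) (g := F) (v := v) (by simp)
      (by simpa using hinteg v)
      (by simpa using hF.continuous.integrable_of_hasCompactSupport hFc)
      (fun x _ => differentiableAt_const _) (fun x _ => hF.differentiable (by norm_num) x)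
    simpa using this
  unfold dbar
  rw [integral_const_mul, integral_add (hinteg 1) ((hinteg I).const_mul I), integral_const_mul, key, key]
  simp

lemma dbar_continuous {F : ℂ → ℂ} (hF : ContDiff ℝ 1 F) : Continuous (dbar F) := by
  have hFfd : Continuous (fderiv ℝ F) := hF.continuous_fderiv (by norm_num)
  unfold dbar
  fun_prop

lemma green_D {h : ℂ → ℂ} (hd : ∀ w ≠ 0, DifferentiableAt ℂ h w)
    (hp : Tendsto h (cocompact ℂ) (cocompact ℂ))
    (hinj : Set.InjOn h extc) (hOo : IsOpen (h '' exto))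
    {Dp : Set ℂ} (hDpo : IsOpen Dp) (hDpb : Bornology.IsBounded Dp)
    (hfr : frontier Dp = h '' Metric.sphere (0 : ℂ) 1) (hDeq : Dp = (h '' extc)ᶜ)
    {F : ℂ → ℂ} (hF : ContDiff ℝ 1 F) :
    ∫ z in Dp, dbar F z = (2 * I)⁻¹ * ∮ w in C(0, 1), F (h w) * deriv h w := by
  obtain ⟨M, hM0, hM⟩ : ∃ M : ℝ, 0 < M ∧ closure Dp ⊆ Metric.ball 0 M := by
    obtain ⟨M, hM⟩ := hDpb.closure.subset_ball (0 : ℂ)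
    exact ⟨max M 1, by positivity, hM.trans (Metric.ball_subset_ball (le_max_left _ _))⟩
  let χ : ContDiffBump (0 : ℂ) := ⟨M, M + 1, hM0, by linarith⟩
  set F2 : ℂ → ℂ := fun z => χ z • F z with hF2
  have hF2c : ContDiff ℝ 1 F2 := χ.contDiff.smul hF
  have hF2s : HasCompactSupport F2 := χ.hasCompactSupport.smul_right
  have hsub2 : exto ⊆ extc := by rw [extc_eq]; exact Set.subset_union_left
  have hsub : Metric.sphere (0 : ℂ) 1 ⊆ extc := by rw [extc_eq]; exact Set.subset_union_right
  have hev : ∀ z ∈ Metric.ball (0 : ℂ) M, F2 =ᶠ[𝓝 z] F := by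
    intro z hz
    filter_upwards [Metric.isOpen_ball.mem_nhds hz] with y hy
    have : χ y = 1 := χ.one_of_mem_closedBall (Metric.ball_subset_closedBall hy)
    simp [hF2, this]
  have e1 : ∫ z in Dp, dbar F z = ∫ z in Dp, dbar F2 z := by
    apply setIntegral_congr_fun hDpo.measurableSet
    intro z hz
    simp only [dbar]
    rw [(hev z (hM (subset_closure hz))).fderiv_eq]
  have e2 : ∮ w in C(0, 1), F (h w) * deriv h w = ∮ w in C(0, 1), F2 (h w) * deriv h w := by
    apply circleIntegral.integral_congr zero_le_one
    intro w hw
    simp only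
    have : h w ∈ Metric.ball (0 : ℂ) M := by
      apply hM
      apply frontier_subset_closure
      rw [hfr]
      exact ⟨w, hw, rfl⟩
    rw [(hev _ this).eq_of_nhds]
  have hinteg : Integrable (dbar F2) := by
    apply (dbar_continuous hF2c).integrable_of_hasCompactSupport
    apply HasCompactSupport.of_support_subset_isCompact hF2s.isCompact
    intro z hz
    by_contra hn
    apply hz
    have : fderiv ℝ F2 z = 0 := by
      by_contra hne
      exact hn (support_fderiv_subset ℝ hne)
    simp [dbar, this]
  have hnull : volume (h '' Metric.sphere (0 : ℂ) 1) = 0 := by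
    apply addHaar_image_eq_zero_of_differentiableOn_of_addHaar_eq_zero
    · intro w hw
      apply DifferentiableAt.differentiableWithinAt
      refine (hd w ?_).restrictScalars ℝ
      rintro rfl
      simp at hw
    · exact Measure.addHaar_sphere _ _ _
  have hc : (Dpᶜ : Set ℂ) = h '' exto ∪ h '' Metric.sphere (0 : ℂ) 1 := by
    rw [hDeq, compl_compl, extc_eq, Set.image_union]
  have hsum := integral_add_compl hDpo.measurableSet hinteg
  rw [integral_dbar_zero hF2c hF2s, hc,
    setIntegral_congr_set (union_ae_eq_left_of_ae_eq_empty (ae_eq_empty.mpr hnull)),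
    green_strip hd hp (hinj.mono hsub2) hOo.measurableSet hF2c hF2s] at hsum
  rw [e1, e2]
  linear_combination hsum

lemma res_lemma {q : ℂ → ℂ} {c : ℂ} (hq : ∀ w ∈ extc, DifferentiableAt ℂ q w)
    (hl : Tendsto (fun w => w * q w) (Bornology.cobounded ℂ) (𝓝 c)) :
    ∮ w in C(0, 1), q w = 2 * Real.pi * I * c := by
  have hmove : ∀ ρ : ℝ, 1 ≤ ρ → ∮ w in C(0, 1), q w = ∮ w in C(0, ρ), q w := by
    intro ρ hρ
    symm
    apply Complex.circleIntegral_eq_of_differentiable_on_annulus_off_countable one_pos hρ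
      Set.countable_empty
    · intro w hw
      apply (hq w _).continuousAt.continuousWithinAt
      have := hw.2
      simpa using this
    · intro w hw
      apply hq
      have := hw.1.2
      show 1 ≤ ‖w‖
      simp at this
      linarith
  have hcw : ∀ ρ : ℝ, 1 ≤ ρ → ∮ w in C(0, ρ), c * (w - 0)⁻¹ = 2 * Real.pi * I * c := by
    intro ρ hρ
    rw [circleIntegral.integral_const_mul, circleIntegral.integral_sub_center_inv _ (by linarith)]
    ring
  rw [← sub_eq_zero, ← norm_le_zero_iff]
  apply le_of_forall_pos_le_add
  intro ε hε
  have h1 : ∀ᶠ w in Bornology.cobounded ℂ, ‖w * q w - c‖ < ε / (2 * Real.pi) := by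
    have := (Metric.tendsto_nhds.mp hl) (ε / (2 * Real.pi)) (by positivity)
    simpa [dist_eq_norm] using this
  rw [← comap_norm_atTop, eventually_comap, eventually_atTop] at h1
  obtain ⟨M, hM⟩ := h1
  set ρ := max 1 M with hρ
  have hρ1 : 1 ≤ ρ := le_max_left _ _
  rw [hmove ρ hρ1, ← hcw ρ hρ1, ← circleIntegral.integral_sub]
  · have := circleIntegral.norm_integral_le_of_norm_le_const (c := 0) (R := ρ)
      (f := fun w => q w - c * (w - 0)⁻¹) (C := ε / (2 * Real.pi) / ρ) (by linarith) ?_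
    · refine this.trans (le_of_eq ?_)
      field_simp
      ring
    · intro w hw
      have hw' : ‖w‖ = ρ := by simpa using hw
      have hw0 : w ≠ 0 := by
        rintro rfl
        simp at hw'
        linarith
      have h2 := hM ‖w‖ (by rw [hw']; exact le_max_right _ _) w rfl
      have h3 : q w - c * (w - 0)⁻¹ = (w * q w - c) / w := by
        rw [sub_zero]; field_simp
      rw [h3, norm_div, hw']
      gcongr
  · apply ContinuousOn.circleIntegrable (by linarith)
    intro w hw
    apply (hq w _).continuousAt.continuousWithinAt
    show 1 ≤ ‖w‖
    have hw' : ‖w‖ = ρ := by simpa using hw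
    linarith
  · apply ContinuousOn.circleIntegrable (by linarith)
    intro w hw
    have hw' : ‖w‖ = ρ := by simpa using hw
    have hw0 : w ≠ 0 := by
      rintro rfl
      simp at hw'
      linarith
    apply ContinuousAt.continuousWithinAt
    apply ContinuousAt.mul continuousAt_const
    exact ContinuousAt.inv₀ (by fun_prop) (by simpa using hw0)

lemma extc_ne {w : ℂ} (hw : w ∈ extc) : w ≠ 0 := by
  rintro rfl
  have : (1:ℝ) ≤ ‖(0:ℂ)‖ := hw
  simp at this
  linarith

lemma tendsto_hz {h : ℂ → ℂ} {r : ℂ} (hA1 : Tendsto (fun w => h w / w) (Bornology.cobounded ℂ) (𝓝 r)) (z : ℂ) :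
    Tendsto (fun w => (h w - z) / w) (Bornology.cobounded ℂ) (𝓝 r) := by
  have h1 : Tendsto (fun w : ℂ => z * w⁻¹) (Bornology.cobounded ℂ) (𝓝 (z * 0)) :=
    tendsto_const_nhds.mul tendsto_inv₀_cobounded
  have := hA1.sub h1
  simp only [mul_zero, sub_zero] at this
  refine this.congr fun w => ?_
  rw [sub_div, div_eq_mul_inv z]

/-- decay of the remainder integrand -/
lemma tendsto_q {h k : ℂ → ℂ} {r c : ℂ} {d : ℕ} (hr : r ≠ 0)
    (hA1 : Tendsto (fun w => h w / w) (Bornology.cobounded ℂ) (𝓝 r))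
    (hA2 : Tendsto (deriv h) (Bornology.cobounded ℂ) (𝓝 r))
    (hA3 : Tendsto (fun w => k w / w ^ d) (Bornology.cobounded ℂ) (𝓝 c)) (z : ℂ) :
    Tendsto (fun w => w * (k w * deriv h w * (h w ^ (d + 1))⁻¹ / (h w - z)))
      (Bornology.cobounded ℂ) (𝓝 0) := by
  have h1 := ((hA3.mul hA2).mul ((hA1.pow (d + 1)).inv₀ (pow_ne_zero _ hr))).mul
    ((tendsto_hz hA1 z).inv₀ hr)
  have h2 := h1.mul (tendsto_inv₀_cobounded (α := ℂ))
  rw [mul_zero] at h2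
  refine h2.congr' ?_
  have h0 : ∀ᶠ w in Bornology.cobounded ℂ, w ≠ (0:ℂ) := Bornology.eventually_ne_cobounded 0
  filter_upwards [h0] with w hw
  rw [div_pow, inv_div, inv_div]
  field_simp
  ring

lemma int_J_interior {h k : ℂ → ℂ} {r c : ℂ} {d : ℕ} (hr : r ≠ 0)
    (hA1 : Tendsto (fun w => h w / w) (Bornology.cobounded ℂ) (𝓝 r))
    (hA2 : Tendsto (deriv h) (Bornology.cobounded ℂ) (𝓝 r))
    (hA3 : Tendsto (fun w => k w / w ^ d) (Bornology.cobounded ℂ) (𝓝 c))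
    (hd : ∀ w ≠ 0, DifferentiableAt ℂ h w)
    (hkd : ∀ w ≠ 0, DifferentiableAt ℂ k w)
    (hd' : ∀ w ≠ 0, DifferentiableAt ℂ (deriv h) w)
    (hne : ∀ w ∈ extc, h w ≠ 0) {z : ℂ} (hz : ∀ w ∈ extc, h w ≠ z) :
    ∮ w in C(0, 1), k w * deriv h w * (h w ^ (d + 1))⁻¹ / (h w - z) = 0 := by
  rw [res_lemma _ (tendsto_q hr hA1 hA2 hA3 z)]
  · ring
  · intro w hw
    have := extc_ne hw
    exact (((hkd w this).mul (hd' w this)).mul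
      (((hd w this).pow _).inv (pow_ne_zero _ (hne w hw)))).div ((hd w this).sub_const z)
      (sub_ne_zero.mpr (hz w hw))

lemma int_log_interior {h : ℂ → ℂ} {r : ℂ} (hr : r ≠ 0)
    (hA1 : Tendsto (fun w => h w / w) (Bornology.cobounded ℂ) (𝓝 r))
    (hA2 : Tendsto (deriv h) (Bornology.cobounded ℂ) (𝓝 r))
    (hd : ∀ w ≠ 0, DifferentiableAt ℂ h w)
    (hd' : ∀ w ≠ 0, DifferentiableAt ℂ (deriv h) w)
    {z : ℂ} (hz : ∀ w ∈ extc, h w ≠ z) :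
    ∮ w in C(0, 1), deriv h w / (h w - z) = 2 * Real.pi * I := by
  rw [res_lemma (c := 1)]
  · ring
  · intro w hw
    have := extc_ne hw
    exact (hd' w this).div ((hd w this).sub_const z)
      (sub_ne_zero.mpr (hz w hw))
  · have h1 := hA2.mul ((tendsto_hz hA1 z).inv₀ hr)
    rw [mul_inv_cancel₀ hr] at h1
    refine h1.congr fun w => ?_
    rw [inv_div]
    ring

lemma int_J_exterior {h k : ℂ → ℂ} {r c : ℂ} {d : ℕ} (hr : r ≠ 0)
    (hA1 : Tendsto (fun w => h w / w) (Bornology.cobounded ℂ) (𝓝 r))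
    (hA2 : Tendsto (deriv h) (Bornology.cobounded ℂ) (𝓝 r))
    (hA3 : Tendsto (fun w => k w / w ^ d) (Bornology.cobounded ℂ) (𝓝 c))
    (hd : ∀ w ≠ 0, DifferentiableAt ℂ h w)
    (hkd : ∀ w ≠ 0, DifferentiableAt ℂ k w)
    (hd' : ∀ w ≠ 0, DifferentiableAt ℂ (deriv h) w)
    (hne : ∀ w ∈ extc, h w ≠ 0) (hinj : Set.InjOn h extc)
    (hderiv : ∀ w ∈ extc, deriv h w ≠ 0) {w₀ : ℂ} (hw₀ : 1 < ‖w₀‖) :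
    ∮ w in C(0, 1), k w * deriv h w * (h w ^ (d + 1))⁻¹ / (h w - h w₀) =
      - (2 * Real.pi * I * (k w₀ * (h w₀ ^ (d + 1))⁻¹)) := by
  have hw₀c : w₀ ∈ extc := show 1 ≤ ‖w₀‖ from hw₀.le
  set D : ℂ → ℂ := dslope h w₀ with hD
  have hDd : ∀ w ≠ 0, DifferentiableAt ℂ D w := by
    have hs : ({0}ᶜ : Set ℂ) ∈ 𝓝 w₀ := isOpen_compl_singleton.mem_nhds (extc_ne hw₀c)
    have := (Complex.differentiableOn_dslope (f := h) hs).mpr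
      (fun w hw => (hd w hw).differentiableWithinAt)
    intro w hw
    exact (this w hw).differentiableAt (isOpen_compl_singleton.mem_nhds hw)
  have hDne : ∀ w ∈ extc, D w ≠ 0 := by
    intro w hw
    by_cases he : w = w₀
    · rw [he, hD, dslope_same]; exact hderiv _ hw₀c
    · rw [hD, dslope_of_ne _ he, slope_def_field]
      exact div_ne_zero (sub_ne_zero.mpr fun e => he (hinj hw hw₀c e)) (sub_ne_zero.mpr he)
  set G : ℂ → ℂ := fun w => k w * deriv h w * (h w ^ (d + 1))⁻¹ / D w with hG
  have hGd : ∀ w ∈ extc, DifferentiableAt ℂ G w := by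
    intro w hw
    have := extc_ne hw
    exact (((hkd w this).mul (hd' w this)).mul
      (((hd w this).pow _).inv (pow_ne_zero _ (hne w hw)))).div (hDd w this) (hDne w hw)
  have hGw₀ : G w₀ = k w₀ * (h w₀ ^ (d + 1))⁻¹ := by
    have := hderiv _ hw₀c
    simp only [hG, hD, dslope_same]
    field_simp
  have hqG : ∀ w, w ≠ w₀ → k w * deriv h w * (h w ^ (d + 1))⁻¹ / (h w - h w₀) = G w / (w - w₀) := by
    intro w hw
    simp only [hG, hD, dslope_of_ne _ hw, slope_def_field]
    have := sub_ne_zero.mpr hw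
    field_simp
  have hev0 : ∀ᶠ w in Bornology.cobounded ℂ, w ≠ w₀ := Bornology.eventually_ne_cobounded w₀
  have hev1 : ∀ᶠ w in Bornology.cobounded ℂ, w ≠ (0:ℂ) := Bornology.eventually_ne_cobounded 0
  have hratio : Tendsto (fun w : ℂ => (w - w₀) / w) (Bornology.cobounded ℂ) (𝓝 1) := by
    apply tendsto_hz (h := fun w => w)
    refine tendsto_const_nhds.congr' ?_
    filter_upwards [hev1] with w hw
    rw [div_self hw]
  have hG0 : Tendsto G (Bornology.cobounded ℂ) (𝓝 0) := by
    have := (tendsto_q hr hA1 hA2 hA3 (h w₀)).mul hratio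
    rw [zero_mul] at this
    refine this.congr' ?_
    filter_upwards [hev0, hev1] with w hw hw1
    rw [hqG w hw]
    have := sub_ne_zero.mpr hw
    field_simp
  have hres : ∮ w in C(0, 1), dslope G w₀ w = 2 * Real.pi * I * (- G w₀) := by
    apply res_lemma
    · intro w hw
      by_cases he : w = w₀
      · have hs : exto ∈ 𝓝 w₀ := exto_open.mem_nhds hw₀
        have := (Complex.differentiableOn_dslope (f := G) hs).mpr
          (fun w hw => (hGd w (show 1 ≤ ‖w‖ from le_of_lt hw)).differentiableWithinAt)
        rw [he]
        exact this.differentiableAt hs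
      · exact (differentiableAt_dslope_of_ne he).mpr (hGd w hw)
    · have := (hG0.sub_const (G w₀)).mul (hratio.inv₀ one_ne_zero)
      simp only [zero_sub, inv_one, mul_one] at this
      refine this.congr' ?_
      filter_upwards [hev0, hev1] with w hw hw1
      rw [dslope_of_ne _ hw, slope_def_field, inv_div]
      ring
  have hz : ∮ w in C(0, 1), G w₀ * (w - w₀)⁻¹ = 0 := by
    apply Complex.circleIntegral_eq_zero_of_differentiable_on_off_countable zero_le_one
      Set.countable_empty
    · intro w hw
      apply ContinuousAt.continuousWithinAt
      apply ContinuousAt.mul continuousAt_const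
      apply ContinuousAt.inv₀ (by fun_prop)
      apply sub_ne_zero.mpr
      rintro rfl
      simp at hw
      linarith
    · intro w hw
      have : w - w₀ ≠ 0 := by
        apply sub_ne_zero.mpr
        rintro rfl
        have := hw.1
        simp at this
        linarith
      fun_prop (disch := assumption)
  have hsph : ∀ w ∈ Metric.sphere (0:ℂ) 1, w ∈ extc ∧ w ≠ w₀ := by
    intro w hw
    have : ‖w‖ = 1 := by simpa using hw
    refine ⟨show 1 ≤ ‖w‖ from this.ge, ?_⟩
    rintro rfl
    linarith
  have hsplit : ∮ w in C(0, 1), k w * deriv h w * (h w ^ (d + 1))⁻¹ / (h w - h w₀) =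
      ∮ w in C(0, 1), (dslope G w₀ w + G w₀ * (w - w₀)⁻¹) := by
    apply circleIntegral.integral_congr zero_le_one
    intro w hw
    obtain ⟨h1, h2⟩ := hsph w hw
    simp only
    rw [hqG w h2, dslope_of_ne _ h2, slope_def_field]
    ring
  rw [hsplit, circleIntegral.integral_add, hres, hz, hGw₀]
  · ring
  · apply ContinuousOn.circleIntegrable zero_le_one
    intro w hw
    obtain ⟨h1, h2⟩ := hsph w hw
    exact ((differentiableAt_dslope_of_ne h2).mpr (hGd w h1)).continuousAt.continuousWithinAt
  · apply ContinuousOn.circleIntegrable zero_le_one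
    intro w hw
    obtain ⟨h1, h2⟩ := hsph w hw
    have := sub_ne_zero.mpr h2
    apply ContinuousAt.continuousWithinAt
    fun_prop (disch := assumption)

lemma geom_id {H z : ℂ} (hH : H ≠ 0) (hz : H ≠ z) (m : ℕ) :
    (H - z)⁻¹ = ∑ k ∈ Finset.Icc 1 m, z ^ (k - 1) * H ^ (-(k : ℤ)) + z ^ m * ((H ^ m)⁻¹ / (H - z)) := by
  have hs := sub_ne_zero.mpr hz
  induction m with
  | zero => simp
  | succ m ih =>
    rw [Finset.sum_Icc_succ_top (by omega), ih]
    rw [add_assoc]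
    congr 1
    rw [zpow_neg, zpow_natCast, Nat.add_sub_cancel]
    field_simp
    ring

lemma circ_sum {h k : ℂ → ℂ} {d : ℕ} {t : ℕ → ℂ}
    (hd : ∀ w ≠ 0, DifferentiableAt ℂ h w)
    (hkd : ∀ w ≠ 0, DifferentiableAt ℂ k w)
    (hd' : ∀ w ≠ 0, DifferentiableAt ℂ (deriv h) w)
    (hne : ∀ w ∈ extc, h w ≠ 0)
    (hk : ∀ w ∈ Metric.sphere (0 : ℂ) 1, (starRingEnd ℂ) (h w) = k w)
    (ht : ∀ k ∈ Finset.Icc 1 (d + 1), t k = (2 * Real.pi * I * k)⁻¹ *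
      ∮ w in C(0, 1), (starRingEnd ℂ) (h w) * (h w) ^ (-(k : ℤ)) * deriv h w)
    {z : ℂ} (hz : ∀ w ∈ Metric.sphere (0 : ℂ) 1, h w ≠ z) :
    ∮ w in C(0, 1), (starRingEnd ℂ) (h w) * deriv h w / (h w - z) =
      2 * Real.pi * I * ∑ k ∈ Finset.Icc 1 (d + 1), k * t k * z ^ (k - 1) +
      z ^ (d + 1) * ∮ w in C(0, 1), k w * deriv h w * (h w ^ (d + 1))⁻¹ / (h w - z) := by
  have hsph : ∀ w ∈ Metric.sphere (0:ℂ) 1, w ∈ extc := by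
    intro w hw
    have : ‖w‖ = 1 := by simpa using hw
    exact show 1 ≤ ‖w‖ from this.ge
  have ht' : ∀ j ∈ Finset.Icc 1 (d + 1), 2 * Real.pi * I * (j * t j) =
      ∮ w in C(0, 1), (starRingEnd ℂ) (h w) * (h w) ^ (-(j : ℤ)) * deriv h w := by
    intro j hj
    have hj0 : (j : ℂ) ≠ 0 := by
      rw [Finset.mem_Icc] at hj
      exact_mod_cast (by omega : j ≠ 0)
    have hpi : (Real.pi : ℂ) ≠ 0 := by exact_mod_cast Real.pi_ne_zero
    rw [ht j hj]
    have := I_ne_zero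
    field_simp
  have e1 : ∮ w in C(0, 1), (starRingEnd ℂ) (h w) * deriv h w / (h w - z) =
      ∮ w in C(0, 1), ((∑ j ∈ Finset.Icc 1 (d + 1), z ^ (j - 1) *
        ((starRingEnd ℂ) (h w) * (h w) ^ (-(j : ℤ)) * deriv h w)) +
        z ^ (d + 1) * (k w * deriv h w * (h w ^ (d + 1))⁻¹ / (h w - z))) := by
    apply circleIntegral.integral_congr zero_le_one
    intro w hw
    simp only
    rw [div_eq_mul_inv, geom_id (hne w (hsph w hw)) (hz w hw) (d + 1), hk w hw, mul_add, Finset.mul_sum]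
    congr 1
    · apply Finset.sum_congr rfl
      intro j _
      ring
    · ring
  have hci : ∀ j : ℕ, CircleIntegrable (fun w => z ^ (j - 1) *
        ((starRingEnd ℂ) (h w) * (h w) ^ (-(j : ℤ)) * deriv h w)) 0 1 := by
    intro j
    apply ContinuousOn.circleIntegrable zero_le_one
    intro w hw
    have h1 := hsph w hw
    have h0 := extc_ne h1
    apply ContinuousAt.continuousWithinAt
    apply ContinuousAt.mul continuousAt_const
    exact ((continuous_conj.continuousAt.comp (hd w h0).continuousAt).mul
      ((hd w h0).continuousAt.zpow₀ _ (Or.inl (hne w h1)))).mul (hd' w h0).continuousAt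
  rw [e1, circleIntegral.integral_add, circleIntegral.integral_const_mul, circleIntegral.integral_fun_sum]
  · congr 1
    rw [Finset.mul_sum]
    apply Finset.sum_congr rfl
    intro j hj
    rw [circleIntegral.integral_const_mul, ← ht' j hj]
    ring
  · intro j _
    exact hci j
  · apply CircleIntegrable.fun_sum
    intro j _
    exact hci j
  · apply ContinuousOn.circleIntegrable zero_le_one
    intro w hw
    have h1 := hsph w hw
    have h0 := extc_ne h1
    apply ContinuousAt.continuousWithinAt
    apply ContinuousAt.mul continuousAt_const
    exact (((hkd w h0).continuousAt.mul (hd' w h0).continuousAt).mul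
      (((hd w h0).continuousAt.pow _).inv₀ (pow_ne_zero _ (hne w h1)))).div
      ((hd w h0).continuousAt.sub continuousAt_const) (sub_ne_zero.mpr (hz w hw))

/-- The reflected function. -/
noncomputable def kf (d : ℕ) (r : ℝ) (a : Fin (d + 1) → ℂ) (w : ℂ) : ℂ :=
  r * w⁻¹ + ∑ j : Fin (d + 1), (starRingEnd ℂ) (a j) * w ^ (j : ℕ)

/-- The parametrization. -/
noncomputable def hf (d : ℕ) (r : ℝ) (a : Fin (d + 1) → ℂ) (w : ℂ) : ℂ :=
  (r : ℂ) * w + ∑ j : Fin (d + 1), a j * w ^ (-(j : ℤ))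

section
variable (d : ℕ) (r : ℝ) (a : Fin (d + 1) → ℂ)

lemma kf_conj (w : ℂ) : (starRingEnd ℂ) (kf d r a w) = hf d r a ((starRingEnd ℂ) w)⁻¹ := by
  simp [kf, hf]

lemma kf_sphere (w : ℂ) (hw : w ∈ Metric.sphere (0 : ℂ) 1) :
    (starRingEnd ℂ) (hf d r a w) = kf d r a w := by
  have h1 : ‖w‖ = 1 := by simpa using hw
  have h2 : ((starRingEnd ℂ) w)⁻¹ = w := by
    rw [← Complex.inv_eq_conj h1, inv_inv]
  conv_lhs => rw [← h2, ← kf_conj, Complex.conj_conj]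

lemma kf_diff (w : ℂ) (hw : w ≠ 0) : DifferentiableAt ℂ (kf d r a) w := by
  unfold kf
  fun_prop (disch := assumption)

lemma hf_hasDeriv (w : ℂ) (hw : w ≠ 0) : HasDerivAt (hf d r a)
    (r + ∑ j : Fin (d + 1), a j * ((-(j : ℤ) : ℤ) * w ^ (-(j : ℤ) - 1))) w := by
  unfold hf
  apply HasDerivAt.add
  · simpa using (hasDerivAt_id w).const_mul (r : ℂ)
  · apply HasDerivAt.fun_sum
    intro j _
    exact (hasDerivAt_zpow _ w (Or.inl hw)).const_mul (a j)

lemma hf_diff (w : ℂ) (hw : w ≠ 0) : DifferentiableAt ℂ (hf d r a) w :=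
  (hf_hasDeriv d r a w hw).differentiableAt

lemma hf_diff' (w : ℂ) (hw : w ≠ 0) : DifferentiableAt ℂ (deriv (hf d r a)) w := by
  have h1 : DifferentiableOn ℂ (hf d r a) {0}ᶜ := fun w hw => (hf_diff d r a w hw).differentiableWithinAt
  exact (h1.deriv isOpen_compl_singleton w hw).differentiableAt (isOpen_compl_singleton.mem_nhds hw)

lemma hf_strict (w : ℂ) (hw : w ≠ 0) : HasStrictDerivAt (hf d r a) (deriv (hf d r a) w) w := by
  have h1 : DifferentiableOn ℂ (hf d r a) {0}ᶜ := fun w hw => (hf_diff d r a w hw).differentiableWithinAt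
  exact (h1.analyticAt (isOpen_compl_singleton.mem_nhds hw)).hasStrictDerivAt

lemma ev_ne0 : ∀ᶠ w in Bornology.cobounded ℂ, w ≠ (0:ℂ) := Bornology.eventually_ne_cobounded 0

lemma hf_A1 : Tendsto (fun w => hf d r a w / w) (Bornology.cobounded ℂ) (𝓝 (r : ℂ)) := by
  have h1 : Tendsto (fun w : ℂ => (r : ℂ) + ∑ j : Fin (d + 1), a j * (w⁻¹) ^ ((j : ℕ) + 1))
      (Bornology.cobounded ℂ) (𝓝 (r + ∑ j : Fin (d + 1), a j * 0 ^ ((j : ℕ) + 1))) := by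
    apply tendsto_const_nhds.add
    apply tendsto_finsetSum
    intro j _
    exact tendsto_const_nhds.mul (tendsto_inv₀_cobounded.pow _)
  simp only [ne_eq, Nat.add_eq_zero_iff, one_ne_zero, and_false, not_false_eq_true, zero_pow, mul_zero,
    Finset.sum_const_zero, add_zero] at h1
  refine h1.congr' ?_
  filter_upwards [ev_ne0] with w hw
  rw [hf, add_div, Finset.sum_div]
  congr 1
  · field_simp
  · apply Finset.sum_congr rfl
    intro j _
    rw [zpow_neg, zpow_natCast, inv_pow, pow_succ]
    field_simp

lemma hf_A2 : Tendsto (deriv (hf d r a)) (Bornology.cobounded ℂ) (𝓝 (r : ℂ)) := by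
  have h1 : Tendsto (fun w : ℂ => (r : ℂ) + ∑ j : Fin (d + 1), a j * ((-(j : ℤ) : ℤ) * (w⁻¹) ^ ((j : ℕ) + 1)))
      (Bornology.cobounded ℂ) (𝓝 (r + ∑ j : Fin (d + 1), a j * ((-(j : ℤ) : ℤ) * 0 ^ ((j : ℕ) + 1)))) := by
    apply tendsto_const_nhds.add
    apply tendsto_finsetSum
    intro j _
    exact tendsto_const_nhds.mul (tendsto_const_nhds.mul (tendsto_inv₀_cobounded.pow _))
  simp only [ne_eq, Nat.add_eq_zero_iff, one_ne_zero, and_false, not_false_eq_true, zero_pow, mul_zero,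
    Finset.sum_const_zero, add_zero] at h1
  refine h1.congr' ?_
  filter_upwards [ev_ne0] with w hw
  rw [(hf_hasDeriv d r a w hw).deriv]
  congr 1
  apply Finset.sum_congr rfl
  intro j _
  rw [show -(j : ℤ) - 1 = -(((j : ℕ) + 1 : ℕ) : ℤ) by push_cast; ring, zpow_neg, zpow_natCast, inv_pow]

lemma kf_A3 : ∃ c : ℂ, Tendsto (fun w => kf d r a w / w ^ d) (Bornology.cobounded ℂ) (𝓝 c) := by
  have h1 : Tendsto (fun w : ℂ => (r : ℂ) * w⁻¹ ^ (d + 1) + ∑ j : Fin (d + 1), (starRingEnd ℂ) (a j) * (w⁻¹) ^ (d - (j : ℕ)))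
      (Bornology.cobounded ℂ) (𝓝 (r * 0 ^ (d + 1) + ∑ j : Fin (d + 1), (starRingEnd ℂ) (a j) * 0 ^ (d - (j : ℕ)))) := by
    apply (tendsto_const_nhds.mul (tendsto_inv₀_cobounded.pow _)).add
    apply tendsto_finsetSum
    intro j _
    exact tendsto_const_nhds.mul (tendsto_inv₀_cobounded.pow _)
  refine ⟨_, h1.congr' ?_⟩
  filter_upwards [ev_ne0] with w hw
  rw [kf, add_div, Finset.sum_div]
  congr 1
  · rw [inv_pow]
    field_simp
    ring
  · apply Finset.sum_congr rfl
    intro j _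
    have hj : (j : ℕ) ≤ d := by omega
    obtain ⟨m, hm⟩ := Nat.exists_eq_add_of_le hj
    have h2 : d - (j : ℕ) = m := by omega
    have h3 : w ^ d = w ^ (j : ℕ) * w ^ m := by rw [← pow_add]; congr 1
    rw [h2, h3, inv_pow]
    field_simp

lemma hf_proper (hr : 0 < r) : Tendsto (hf d r a) (cocompact ℂ) (cocompact ℂ) := by
  rw [← Metric.cobounded_eq_cocompact, ← tendsto_norm_atTop_iff_cobounded]
  have h1 := (hf_A1 d r a).norm
  have h2 := Filter.Tendsto.pos_mul_atTop (C := ‖(r:ℂ)‖) (by simpa using hr.ne') h1 (tendsto_norm_cobounded_atTop (E := ℂ))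
  refine h2.congr' ?_
  filter_upwards [ev_ne0] with w hw
  rw [norm_div]
  have := norm_ne_zero_iff.mpr hw
  field_simp
end

section
variable {d : ℕ} {r : ℝ} {a : Fin (d + 1) → ℂ} {t : ℕ → ℂ}

lemma circ_interior (hr : 0 < r) (hne : ∀ w ∈ extc, hf d r a w ≠ 0)
    (ht : ∀ k ∈ Finset.Icc 1 (d + 1), t k = (2 * Real.pi * I * k)⁻¹ *
      ∮ w in C(0, 1), (starRingEnd ℂ) (hf d r a w) * (hf d r a w) ^ (-(k : ℤ)) * deriv (hf d r a) w)
    {z : ℂ} (hz : ∀ w ∈ extc, hf d r a w ≠ z) :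
    (2 * I)⁻¹ * ∮ w in C(0, 1), ((starRingEnd ℂ) (hf d r a w) - (starRingEnd ℂ) z) / (z - hf d r a w) *
      deriv (hf d r a) w =
    Real.pi * ((starRingEnd ℂ) z - ∑ k ∈ Finset.Icc 1 (d + 1), k * t k * z ^ (k - 1)) := by
  have hrc : (r : ℂ) ≠ 0 := by exact_mod_cast hr.ne'
  obtain ⟨c, hA3⟩ := kf_A3 d r a
  have hsph : ∀ w ∈ Metric.sphere (0:ℂ) 1, w ∈ extc := by
    intro w hw
    have : ‖w‖ = 1 := by simpa using hw
    exact show 1 ≤ ‖w‖ from this.ge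
  have e1 := circ_sum (hf_diff d r a) (kf_diff d r a) (hf_diff' d r a) hne (kf_sphere d r a) ht
    (fun w hw => hz w (hsph w hw))
  rw [int_J_interior hrc (hf_A1 d r a) (hf_A2 d r a) hA3 (hf_diff d r a) (kf_diff d r a)
    (hf_diff' d r a) hne hz] at e1
  have e2 := int_log_interior hrc (hf_A1 d r a) (hf_A2 d r a) (hf_diff d r a) (hf_diff' d r a) hz
  have e3 : ∮ w in C(0, 1), ((starRingEnd ℂ) (hf d r a w) - (starRingEnd ℂ) z) / (z - hf d r a w) *
      deriv (hf d r a) w = ∮ w in C(0, 1), ((starRingEnd ℂ) z * (deriv (hf d r a) w / (hf d r a w - z))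
        - (starRingEnd ℂ) (hf d r a w) * deriv (hf d r a) w / (hf d r a w - z)) := by
    apply circleIntegral.integral_congr zero_le_one
    intro w hw
    simp only
    have h1 := sub_ne_zero.mpr (hz w (hsph w hw))
    have h2 := sub_ne_zero.mpr (hz w (hsph w hw)).symm
    rw [show z - hf d r a w = - (hf d r a w - z) by ring]
    field_simp
    ring
  rw [e3, circleIntegral.integral_sub, circleIntegral.integral_const_mul, e1, e2]
  · have := I_ne_zero
    field_simp
    ring
  · apply ContinuousOn.circleIntegrable zero_le_one
    intro w hw
    have h1 := hsph w hw
    have h0 := extc_ne h1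
    apply ContinuousAt.continuousWithinAt
    apply ContinuousAt.mul continuousAt_const
    exact (hf_diff' d r a w h0).continuousAt.div
      ((hf_diff d r a w h0).continuousAt.sub continuousAt_const) (sub_ne_zero.mpr (hz w h1))
  · apply ContinuousOn.circleIntegrable zero_le_one
    intro w hw
    have h1 := hsph w hw
    have h0 := extc_ne h1
    apply ContinuousAt.continuousWithinAt
    exact ((continuous_conj.continuousAt.comp (hf_diff d r a w h0).continuousAt).mul
      (hf_diff' d r a w h0).continuousAt).div
      ((hf_diff d r a w h0).continuousAt.sub continuousAt_const) (sub_ne_zero.mpr (hz w h1))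

lemma circ_exterior (hr : 0 < r) (hne : ∀ w ∈ extc, hf d r a w ≠ 0)
    (ht : ∀ k ∈ Finset.Icc 1 (d + 1), t k = (2 * Real.pi * I * k)⁻¹ *
      ∮ w in C(0, 1), (starRingEnd ℂ) (hf d r a w) * (hf d r a w) ^ (-(k : ℤ)) * deriv (hf d r a) w)
    (hinj : Set.InjOn (hf d r a) extc) (hderiv : ∀ w ∈ extc, deriv (hf d r a) w ≠ 0)
    {w₀ : ℂ} (hw₀ : 1 < ‖w₀‖) :
    (2 * I)⁻¹ * ∮ w in C(0, 1), ((starRingEnd ℂ) (hf d r a w) - 0) / (hf d r a w₀ - hf d r a w) *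
      deriv (hf d r a) w =
    Real.pi * (kf d r a w₀ - ∑ k ∈ Finset.Icc 1 (d + 1), k * t k * (hf d r a w₀) ^ (k - 1)) := by
  have hrc : (r : ℂ) ≠ 0 := by exact_mod_cast hr.ne'
  obtain ⟨c, hA3⟩ := kf_A3 d r a
  have hw₀c : w₀ ∈ extc := show 1 ≤ ‖w₀‖ from hw₀.le
  have hsph : ∀ w ∈ Metric.sphere (0:ℂ) 1, w ∈ extc ∧ w ≠ w₀ := by
    intro w hw
    have : ‖w‖ = 1 := by simpa using hw
    refine ⟨show 1 ≤ ‖w‖ from this.ge, ?_⟩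
    rintro rfl
    linarith
  have hz : ∀ w ∈ Metric.sphere (0:ℂ) 1, hf d r a w ≠ hf d r a w₀ := fun w hw e =>
    (hsph w hw).2 (hinj (hsph w hw).1 hw₀c e)
  have e1 := circ_sum (hf_diff d r a) (kf_diff d r a) (hf_diff' d r a) hne (kf_sphere d r a) ht hz
  rw [int_J_exterior hrc (hf_A1 d r a) (hf_A2 d r a) hA3 (hf_diff d r a) (kf_diff d r a)
    (hf_diff' d r a) hne hinj hderiv hw₀] at e1
  have e3 : ∮ w in C(0, 1), ((starRingEnd ℂ) (hf d r a w) - 0) / (hf d r a w₀ - hf d r a w) *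
      deriv (hf d r a) w = ∮ w in C(0, 1), (-1 : ℂ) * (
        (starRingEnd ℂ) (hf d r a w) * deriv (hf d r a) w / (hf d r a w - hf d r a w₀)) := by
    apply circleIntegral.integral_congr zero_le_one
    intro w hw
    simp only
    have h1 := sub_ne_zero.mpr (hz w hw)
    rw [show hf d r a w₀ - hf d r a w = - (hf d r a w - hf d r a w₀) by ring]
    field_simp
    ring
  rw [e3, circleIntegral.integral_const_mul, e1]
  have := I_ne_zero
  have := hne _ hw₀c
  field_simp
  ring
end

lemma log_norm_integrableOn_ball (M : ℝ) :
    IntegrableOn (fun u : ℂ => Real.log ‖u‖) (Metric.ball 0 M) := by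
  by_cases hM : 0 < M
  swap
  · rw [Metric.ball_eq_empty.mpr (not_lt.mp hM)]; exact integrableOn_empty
  have h1 : Integrable (fun u : ℂ => (Set.Iio M).indicator Real.log ‖u‖) := by
    rw [integrable_fun_norm_addHaar (volume : Measure ℂ) (f := (Set.Iio M).indicator Real.log)]
    have h2 : (fun y : ℝ => y ^ (Module.finrank ℝ ℂ - 1) • (Set.Iio M).indicator Real.log y) =
        (Set.Iio M).indicator (fun y => y * Real.log y) := by
      ext y
      simp only [Set.indicator, Complex.finrank_real_complex, smul_eq_mul]
      split_ifs <;> simp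
    rw [h2]
    apply IntegrableOn.congr_set_ae (s := Set.Ioi 0) _ (ae_eq_refl _)
    rw [integrableOn_indicator_iff measurableSet_Iio]
    apply IntegrableOn.mono_set (t := Set.Icc 0 M)
    · exact Real.continuous_mul_log.continuousOn.integrableOn_compact isCompact_Icc
    · intro y hy
      exact ⟨le_of_lt hy.2, le_of_lt hy.1⟩
  rw [← integrable_indicator_iff Metric.isOpen_ball.measurableSet]
  refine h1.congr (ae_of_all _ fun u => ?_)
  simp [Set.indicator]

lemma log_norm_integrableOn {D : Set ℂ} (hDb : Bornology.IsBounded D) (z : ℂ) :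
    IntegrableOn (fun ζ : ℂ => Real.log ‖z - ζ‖) D := by
  obtain ⟨M, hM⟩ := hDb.subset_ball z
  apply IntegrableOn.mono_set _ hM
  have h1 := log_norm_integrableOn_ball M
  rw [← integrable_indicator_iff Metric.isOpen_ball.measurableSet] at h1 ⊢
  refine (h1.comp_sub_left z).congr (ae_of_all _ fun u => ?_)
  simp [Set.indicator, dist_eq_norm, norm_sub_rev]

lemma L_eq {D : Set ℂ} (hDb : Bornology.IsBounded D) (z : ℂ) :
    ∫ ζ in D, Real.log ‖z / ζ - 1‖⁻¹ =
      (∫ ζ in D, Real.log ‖0 - ζ‖) - ∫ ζ in D, Real.log ‖z - ζ‖ := by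
  rw [← integral_sub (log_norm_integrableOn hDb 0) (log_norm_integrableOn hDb z)]
  apply integral_congr_ae
  have h0 : ∀ᵐ ζ ∂(volume.restrict D), ζ ≠ 0 := ae_restrict_of_ae (Measure.ae_ne volume 0)
  have h1 : ∀ᵐ ζ ∂(volume.restrict D), ζ ≠ z := ae_restrict_of_ae (Measure.ae_ne volume z)
  filter_upwards [h0, h1] with ζ h0 h1
  have h2 : z / ζ - 1 = (z - ζ) / ζ := by field_simp
  rw [h2, norm_div, inv_div, Real.log_div (by simpa using h0)
    (by simpa [sub_eq_zero] using h1.symm), zero_sub, norm_neg]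

lemma my_fderiv_sub {X : Type*} [NormedAddCommGroup X] [NormedSpace ℝ X] {f : ℂ → X}
    (hf : Differentiable ℝ f) (a x : ℂ) :
    fderiv ℝ (fun x => f (a - x)) x = - fderiv ℝ f (a - x) := by
  have h1 : HasFDerivAt f (fderiv ℝ f (a - x)) (a - x) := (hf _).hasFDerivAt
  have h2 := h1.comp x ((hasFDerivAt_id x).const_sub a)
  have h3 : HasFDerivAt (fun x => f (a - x)) _ x := h2
  rw [h3.fderiv]
  ext
  simp

lemma odd_ball {X : Type*} [NormedAddCommGroup X] [NormedSpace ℝ X] {g : ℂ → X}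
    (hg : ∀ u, g (-u) = - g u) (z₀ : ℂ) (ε : ℝ) :
    ∫ ζ in Metric.closedBall z₀ ε, g (z₀ - ζ) = 0 := by
  set G : ℂ → X := (Metric.closedBall 0 ε).indicator g with hG
  have hodd : ∀ u, G (-u) = - G u := by
    intro u
    simp only [hG, Set.indicator, Metric.mem_closedBall, dist_zero_right, norm_neg]
    split_ifs
    · exact hg u
    · simp
  have h1 : ∫ ζ in Metric.closedBall z₀ ε, g (z₀ - ζ) = ∫ ζ, G (z₀ - ζ) := by
    rw [← integral_indicator Metric.isClosed_closedBall.measurableSet]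
    congr 1
    ext ζ
    simp [hG, Set.indicator, dist_eq_norm, norm_sub_rev]
  rw [h1, integral_sub_left_eq_self]
  have h2 : ∫ u, G u = - ∫ u, G u := by
    conv_lhs => rw [← integral_neg_eq_self]
    simp only [hodd, integral_neg]
  have h3 : (2 : ℝ) • ∫ u, G u = 0 := by
    rw [two_smul]
    nth_rewrite 1 [h2]
    simp
  exact (smul_eq_zero.mp h3).resolve_left two_ne_zero

lemma odd_int {X : Type*} [NormedAddCommGroup X] [NormedSpace ℝ X] {g : ℂ → X}
    {D : Set ℂ} {z₀ : ℂ} {ε : ℝ} (hε : 0 < ε)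
    (hcase : (Metric.ball z₀ (2 * ε) ⊆ D ∧ ∀ u, g (-u) = - g u) ∨ Disjoint (Metric.ball z₀ (2 * ε)) D)
    (hinteg : IntegrableOn (fun ζ => g (z₀ - ζ)) D) :
    ∫ ζ in D, g (z₀ - ζ) = ∫ ζ in D \ Metric.closedBall z₀ ε, g (z₀ - ζ) := by
  have hsub : Metric.closedBall z₀ ε ⊆ Metric.ball z₀ (2 * ε) :=
    Metric.closedBall_subset_ball (by linarith)
  rcases hcase with ⟨h1, hg⟩ | h1
  · rw [← integral_inter_add_sdiff (s := D) (t := Metric.closedBall z₀ ε) Metric.isClosed_closedBall.measurableSet hinteg,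
      Set.inter_eq_self_of_subset_right (hsub.trans h1), odd_ball hg, zero_add]
  · rw [sdiff_eq_left.mpr]
    exact (h1.mono_left hsub).symm

lemma log_norm_deriv {u : ℂ} (hu : u ≠ 0) (v : ℂ) :
    DifferentiableAt ℝ (fun u : ℂ => Real.log ‖u‖) u ∧
    fderiv ℝ (fun u : ℂ => Real.log ‖u‖) u v = (v * u⁻¹).re := by
  have h0 : ‖u‖ ^ 2 ≠ 0 := pow_ne_zero _ (norm_ne_zero_iff.mpr hu)
  have h1 := ((hasStrictFDerivAt_norm_sq u).hasFDerivAt.log h0).const_mul (1 / 2 : ℝ)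
  have h2 : (fun u : ℂ => Real.log ‖u‖) = fun u => (1 / 2 : ℝ) * Real.log (‖u‖ ^ 2) := by
    ext u
    rw [Real.log_pow]; push_cast; ring
  rw [h2, h1.fderiv]
  refine ⟨h1.differentiableAt, ?_⟩
  simp only [_root_.smul_apply, innerSL_apply_apply, smul_eq_mul, nsmul_eq_mul, Complex.inner]
  rw [Complex.inv_def, ← Complex.normSq_eq_norm_sq]
  rw [Complex.normSq_eq_norm_sq]
  simp only [mul_re, conj_re, conj_im, ofReal_re, ofReal_im, mul_im]
  push_cast
  field_simp
  ring

lemma F_props {ε : ℝ} (ψ : ContDiffBump (0 : ℂ)) (hψ : ψ.rOut = ε) :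
    ∃ A : ℂ → ℂ, (∀ u, A (-u) = - A u) ∧ ContDiff ℝ 1 A ∧ ∀ u, ε < ‖u‖ → A u = u⁻¹ := by
  have hone : ∀ u, ψ (-u) = ψ u := fun u => ψ.neg u
  refine ⟨fun u => (1 - (ψ u : ℂ)) * u⁻¹, ?_, ?_, ?_⟩
  · intro u
    simp only [hone, inv_neg]
    ring
  · rw [contDiff_iff_contDiffAt]
    intro u
    by_cases hu : u = 0
    · subst hu
      have : (fun u => (1 - (ψ u : ℂ)) * u⁻¹) =ᶠ[𝓝 0] fun _ => 0 := by
        filter_upwards [ψ.eventuallyEq_one] with u hu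
        simp [hu]
      exact contDiffAt_const.congr_of_eventuallyEq this
    · apply ContDiffAt.mul
      · exact contDiffAt_const.sub (ofRealCLM.contDiff.contDiffAt.comp u ψ.contDiffAt)
      · exact contDiffAt_inv ℝ hu
  · intro u hu
    have : ψ u = 0 := ψ.zero_of_le_dist (by rw [hψ]; simpa using hu.le)
    simp [this]

lemma pot_deriv {D : Set ℂ} (hDo : IsOpen D) (hDb : Bornology.IsBounded D) {z₀ c : ℂ} {ε : ℝ} (hε : 0 < ε)
    (hcase : (Metric.ball z₀ (2 * ε) ⊆ D ∧ c = (starRingEnd ℂ) z₀) ∨ Disjoint (Metric.ball z₀ (2 * ε)) D) :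
    ∃ F : ℂ → ℂ, ContDiff ℝ 1 F ∧
      (∀ ζ, ε < ‖z₀ - ζ‖ → F ζ = ((starRingEnd ℂ) ζ - c) / (z₀ - ζ)) ∧
      ∃ L : ℂ →L[ℝ] ℝ, HasFDerivAt (fun z => ∫ ζ in D, Real.log ‖z - ζ‖) L z₀ ∧
        ∀ v, L v = (v * ∫ ζ in D, dbar F ζ).re := by
  let ψ : ContDiffBump (0 : ℂ) := ⟨ε / 2, ε, by positivity, by linarith⟩
  have hψ : ψ.rOut = ε := rfl
  obtain ⟨A, hAodd, hAc, hAeq⟩ := F_props ψ hψ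
  set F : ℂ → ℂ := fun ζ => ((starRingEnd ℂ) ζ - c) * A (z₀ - ζ) with hF
  have hFc : ContDiff ℝ 1 F := by
    apply ContDiff.mul
    · exact (conjCLE.contDiff).sub contDiff_const
    · exact hAc.comp (contDiff_const.sub contDiff_id)
  have hFeq : ∀ ζ, ε < ‖z₀ - ζ‖ → F ζ = ((starRingEnd ℂ) ζ - c) / (z₀ - ζ) := by
    intro ζ hζ
    simp only [hF]
    rw [hAeq _ hζ, div_eq_mul_inv]
  have hFdb : ∀ ζ, ε < ‖z₀ - ζ‖ → dbar F ζ = (z₀ - ζ)⁻¹ := by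
    intro ζ hζ
    have hne : z₀ - ζ ≠ 0 := by
      intro h; rw [h] at hζ; simp at hζ; linarith
    have hev : F =ᶠ[𝓝 ζ] fun ζ => ((starRingEnd ℂ) ζ - c) * (z₀ - ζ)⁻¹ := by
      have ho : IsOpen {ζ : ℂ | ε < ‖z₀ - ζ‖} := isOpen_lt continuous_const (by fun_prop)
      filter_upwards [ho.mem_nhds hζ] with x hx
      rw [hFeq x hx, div_eq_mul_inv]
    have d1 : HasFDerivAt (fun ζ : ℂ => (starRingEnd ℂ) ζ - c) (conjCLE : ℂ →L[ℝ] ℂ) ζ :=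
      (conjCLE : ℂ →L[ℝ] ℂ).hasFDerivAt.sub_const c
    have d2 : HasDerivAt (fun ζ : ℂ => (z₀ - ζ)⁻¹) (1 / (z₀ - ζ) ^ 2) ζ := by
      have := ((hasDerivAt_id' ζ).const_sub z₀).fun_inv hne
      simpa using this
    have d3 := d1.mul (d2.hasFDerivAt.restrictScalars ℝ)
    unfold dbar
    rw [hev.fderiv_eq]
    have d4 : fderiv ℝ (fun ζ => ((starRingEnd ℂ) ζ - c) * (z₀ - ζ)⁻¹) ζ = _ := d3.fderiv
    rw [d4]
    simp only [_root_.add_apply, _root_.smul_apply, ContinuousLinearMap.coe_restrictScalars',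
      ContinuousLinearMap.toSpanSingleton_apply, smul_eq_mul, one_mul, ContinuousLinearEquiv.coe_coe,
      conjCLE_apply, map_one, conj_I]
    linear_combination (1 / 2 * (((starRingEnd ℂ) ζ - c) * (1 / (z₀ - ζ) ^ 2)) - 1 / 2 * (z₀ - ζ)⁻¹) * I_sq
  refine ⟨F, hFc, hFeq, ?_⟩
  obtain ⟨M, hM0, hM⟩ : ∃ M : ℝ, 0 < M ∧ D ⊆ Metric.ball z₀ M := by
    obtain ⟨M, hM⟩ := hDb.subset_ball z₀
    exact ⟨max M 1, by positivity, hM.trans (Metric.ball_subset_ball (le_max_left _ _))⟩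
  have hcontint : ∀ {X : Type} [NormedAddCommGroup X] {g : ℂ → X}, Continuous g → IntegrableOn g D := by
    intro X _ g hg
    apply IntegrableOn.mono_set (t := Metric.closedBall z₀ M)
    · exact hg.continuousOn.integrableOn_compact (isCompact_closedBall _ _)
    · exact hM.trans Metric.ball_subset_closedBall
  have hdbc := dbar_continuous hFc
  -- the kernel
  set κ : ℂ → ℝ := fun u => (1 - ψ u) * Real.log ‖u‖ with hκ
  have hκc : ContDiff ℝ 1 κ := by
    rw [contDiff_iff_contDiffAt]
    intro u
    by_cases hu : u = 0
    · subst hu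
      have : κ =ᶠ[𝓝 0] fun _ => 0 := by
        filter_upwards [ψ.eventuallyEq_one] with u hu
        simp [hκ, hu]
      exact contDiffAt_const.congr_of_eventuallyEq this
    · apply ContDiffAt.mul
      · exact contDiffAt_const.sub ψ.contDiffAt
      · exact (contDiffAt_norm ℝ hu).log (norm_ne_zero_iff.mpr hu)
  have hκeven : ∀ u, κ (-u) = κ u := by
    intro u
    simp only [hκ, ψ.neg, norm_neg]
  have hκodd : ∀ u, fderiv ℝ κ (-u) = - fderiv ℝ κ u := by
    intro u
    have h1 : (fun u => κ (-u)) = κ := funext hκeven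
    have h2 := my_fderiv_sub (hκc.differentiable (by norm_num)) 0 u
    simp only [zero_sub, h1] at h2
    rw [h2, neg_neg]
  have hκd : ∀ u v, ε < ‖u‖ → fderiv ℝ κ u v = (v * u⁻¹).re := by
    intro u v hu
    have hne : u ≠ 0 := by
      intro h; rw [h] at hu; simp at hu; linarith
    have hev : κ =ᶠ[𝓝 u] fun u => Real.log ‖u‖ := by
      have ho : IsOpen {u : ℂ | ε < ‖u‖} := isOpen_lt continuous_const (by fun_prop)
      filter_upwards [ho.mem_nhds hu] with x hx
      have : ψ x = 0 := ψ.zero_of_le_dist (by rw [hψ]; simpa using le_of_lt hx)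
      simp [hκ, this]
    rw [hev.fderiv_eq]
    exact (log_norm_deriv hne v).2
  have hκfd : Continuous (fderiv ℝ κ) := hκc.continuous_fderiv (by norm_num)
  -- decomposition
  set g : ℂ → ℝ := fun u => ψ u * Real.log ‖u‖ with hg
  have hgz : ∀ u, ε ≤ ‖u‖ → g u = 0 := by
    intro u hu
    have : ψ u = 0 := ψ.zero_of_le_dist (by rw [hψ]; simpa using hu)
    simp [hg, this]
  obtain ⟨K, hK⟩ : ∃ K : ℝ, ∀ z ∈ Metric.ball z₀ ε, ∫ ζ in D, g (z - ζ) = K := by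
    rcases hcase with ⟨h1, -⟩ | h1
    · refine ⟨∫ u, g u, fun z hz => ?_⟩
      rw [setIntegral_eq_integral_of_forall_compl_eq_zero, integral_sub_left_eq_self]
      intro ζ hζ
      apply hgz
      by_contra hcon
      push Not at hcon
      apply hζ
      apply h1
      rw [Metric.mem_ball] at hz ⊢
      have : dist ζ z < ε := by rw [dist_comm, dist_eq_norm]; exact hcon
      linarith [dist_triangle ζ z z₀]
    · refine ⟨0, fun z hz => ?_⟩
      apply setIntegral_eq_zero_of_forall_eq_zero
      intro ζ hζ
      apply hgz
      by_contra hcon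
      push Not at hcon
      apply Set.disjoint_left.mp h1 _ hζ
      rw [Metric.mem_ball] at hz ⊢
      have : dist ζ z < ε := by rw [dist_comm, dist_eq_norm]; exact hcon
      linarith [dist_triangle ζ z z₀]
  have hU : ∀ z ∈ Metric.ball z₀ ε, ∫ ζ in D, Real.log ‖z - ζ‖ = (∫ ζ in D, κ (z - ζ)) + K := by
    intro z hz
    have hi1 : IntegrableOn (fun ζ => κ (z - ζ)) D := hcontint (hκc.continuous.comp (by fun_prop))
    have hi2 : IntegrableOn (fun ζ => g (z - ζ)) D := by
      refine ((log_norm_integrableOn hDb z).sub hi1).congr (ae_of_all _ fun ζ => ?_)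
      simp only [hg, hκ, Pi.sub_apply]
      ring
    rw [← hK z hz, ← integral_add hi1 hi2]
    congr 1
    ext ζ
    simp only [hg, hκ]
    ring
  -- differentiate
  obtain ⟨B, hB⟩ : ∃ B : ℝ, ∀ u ∈ Metric.closedBall (0:ℂ) (M + ε), ‖fderiv ℝ κ u‖ ≤ B :=
    (isCompact_closedBall _ _).exists_bound_of_continuousOn hκfd.continuousOn
  have hfin : IsFiniteMeasure (volume.restrict D) := ⟨by
    rw [Measure.restrict_apply_univ]; exact hDb.measure_lt_top⟩
  have hder : HasFDerivAt (fun z => ∫ ζ in D, κ (z - ζ)) (∫ ζ in D, fderiv ℝ κ (z₀ - ζ)) z₀ := by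
    apply hasFDerivAt_integral_of_dominated_of_fderiv_le (bound := fun _ => B)
      (F' := fun z ζ => fderiv ℝ κ (z - ζ)) (s := Metric.ball z₀ ε) (Metric.ball_mem_nhds z₀ hε)
    · exact Eventually.of_forall fun z =>
        (hκc.continuous.comp (by fun_prop)).aestronglyMeasurable
    · exact hcontint (hκc.continuous.comp (by fun_prop))
    · exact (hκfd.comp (by fun_prop)).aestronglyMeasurable
    · rw [ae_restrict_iff' hDo.measurableSet]
      refine ae_of_all _ fun ζ hζ z hz => hB _ ?_
      rw [mem_closedBall_zero_iff, ← dist_eq_norm]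
      have h1 := hM hζ
      rw [Metric.mem_ball] at hz h1
      linarith [dist_triangle_right z ζ z₀]
    · exact integrable_const _
    · refine ae_of_all _ fun ζ z _ => ?_
      have h1 : HasFDerivAt κ (fderiv ℝ κ (z - ζ)) (z - ζ) :=
        (hκc.differentiable (by norm_num) _).hasFDerivAt
      have h2 := h1.comp z ((hasFDerivAt_id z).sub_const ζ)
      rw [ContinuousLinearMap.comp_id] at h2
      exact h2
  refine ⟨∫ ζ in D, fderiv ℝ κ (z₀ - ζ), ?_, ?_⟩
  · apply (hder.add_const K).congr_of_eventuallyEq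
    filter_upwards [Metric.ball_mem_nhds z₀ hε] with z hz
    exact hU z hz
  · intro v
    have hdb' : IntegrableOn (dbar F) D := hcontint hdbc
    have hi0 : IntegrableOn (fun ζ => fderiv ℝ κ (z₀ - ζ)) D := hcontint (hκfd.comp (by fun_prop))
    rw [ContinuousLinearMap.integral_apply hi0]
    have e1 : ∫ ζ in D, (fderiv ℝ κ (z₀ - ζ)) v =
        ∫ ζ in D \ Metric.closedBall z₀ ε, (fderiv ℝ κ (z₀ - ζ)) v := by
      apply odd_int (g := fun u => fderiv ℝ κ u v) hε
      · rcases hcase with h1 | h1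
        · left
          refine ⟨h1.1, fun u => ?_⟩
          simp only [hκodd]
          rfl
        · exact Or.inr h1
      · exact hcontint (by
          have : Continuous fun ζ => fderiv ℝ κ (z₀ - ζ) := hκfd.comp (by fun_prop)
          fun_prop)
    have e2 : ∫ ζ in D, dbar F ζ = ∫ ζ in D \ Metric.closedBall z₀ ε, dbar F ζ := by
      have := odd_int (g := fun u => dbar F (z₀ - u)) (D := D) (z₀ := z₀) hε ?_ ?_
      · simpa using this
      · rcases hcase with ⟨h1, hc⟩ | h1
        · left
          refine ⟨h1, fun u => ?_⟩
          have hFev : (fun x => F (2 * z₀ - x)) = F := by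
            ext x
            simp only [hF, hc]
            rw [show z₀ - (2 * z₀ - x) = -(z₀ - x) by ring, hAodd]
            simp only [map_sub, map_mul, map_ofNat]
            ring
          have h2 := my_fderiv_sub (hFc.differentiable (by norm_num)) (2 * z₀) (z₀ - u)
          rw [hFev] at h2
          simp only [dbar]
          rw [show 2 * z₀ - (z₀ - u) = z₀ - -u by ring] at h2
          rw [h2]
          simp only [_root_.neg_apply]
          ring
        · exact Or.inr h1
      · simpa using hdb'
    have hm : MeasurableSet (D \ Metric.closedBall z₀ ε) :=
      hDo.measurableSet.diff Metric.isClosed_closedBall.measurableSet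
    have hi3 : IntegrableOn (dbar F) (D \ Metric.closedBall z₀ ε) := hdb'.mono_set Set.sdiff_subset
    rw [e1, e2, ← integral_const_mul]
    have e3 := integral_re (𝕜 := ℂ) (hi3.const_mul v)
    simp only [RCLike.re_eq_complex_re] at e3
    rw [← e3]
    apply setIntegral_congr_fun hm
    intro ζ hζ
    have h1 : ε < ‖z₀ - ζ‖ := by
      have := hζ.2
      rw [Metric.mem_closedBall, not_le, dist_comm, dist_eq_norm] at this
      exact this
    simp only
    rw [hκd _ _ h1, hFdb _ h1]

/-- derivative of the polynomial external potential -/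
lemma V_deriv {n : ℕ} {t₀ : ℝ} {t : ℕ → ℂ} {V : ℂ → ℝ}
    (hV : ∀ z : ℂ, V z = (1 / t₀) *
      (‖z‖ ^ 2 - 2 * (∑ k ∈ Finset.Icc 1 n, t k * z ^ k).re)) (z : ℂ) :
    ∃ L : ℂ →L[ℝ] ℝ, HasFDerivAt V L z ∧ ∀ v, L v = (2 / t₀) *
      (v * ((starRingEnd ℂ) z - ∑ k ∈ Finset.Icc 1 n, k * t k * z ^ (k - 1))).re := by
  have h1 := (hasStrictFDerivAt_norm_sq z).hasFDerivAt
  have h2 : HasDerivAt (fun z : ℂ => ∑ k ∈ Finset.Icc 1 n, t k * z ^ k)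
      (∑ k ∈ Finset.Icc 1 n, t k * (k * z ^ (k - 1))) z := by
    apply HasDerivAt.fun_sum
    intro k _
    exact (hasDerivAt_pow k z).const_mul (t k)
  have h3 := (reCLM.hasFDerivAt (x := ∑ k ∈ Finset.Icc 1 n, t k * z ^ k)).comp z (h2.hasFDerivAt.restrictScalars ℝ)
  have h4 := ((h1.sub (h3.const_mul 2)).const_mul (1 / t₀))
  refine ⟨_, h4.congr_of_eventuallyEq (Eventually.of_forall fun z => ?_), fun v => ?_⟩
  · simp only [hV]
    rfl
  · have h5 : ∑ k ∈ Finset.Icc 1 n, t k * (k * z ^ (k - 1)) = ∑ k ∈ Finset.Icc 1 n, k * t k * z ^ (k - 1) :=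
      Finset.sum_congr rfl fun k _ => by ring
    rw [h5]
    simp only [_root_.smul_apply, _root_.sub_apply, ContinuousLinearMap.comp_apply,
      ContinuousLinearMap.coe_restrictScalars', ContinuousLinearMap.toSpanSingleton_apply,
      innerSL_apply_apply, smul_eq_mul, nsmul_eq_mul, Complex.inner, reCLM_apply]
    rw [mul_sub v, sub_re]
    push_cast
    ring

/-- derivative of the effective potential from that of the logarithmic potential -/
lemma E_deriv {n : ℕ} {t₀ : ℝ} (ht₀ : 0 < t₀) {t : ℕ → ℂ} {V E : ℂ → ℝ} {Dp : Set ℂ} (hDpb : Bornology.IsBounded Dp)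
    (hV : ∀ z : ℂ, V z = (1 / t₀) *
      (‖z‖ ^ 2 - 2 * (∑ k ∈ Finset.Icc 1 n, t k * z ^ k).re))
    (hE : ∀ z : ℂ, E z = V z +
      (2 / (Real.pi * t₀)) * ∫ ζ in Dp, Real.log ‖z / ζ - 1‖⁻¹)
    {z c : ℂ} {LU : ℂ →L[ℝ] ℝ} (hU : HasFDerivAt (fun z => ∫ ζ in Dp, Real.log ‖z - ζ‖) LU z)
    (hLU : ∀ v, LU v = (v * (Real.pi * (c - ∑ k ∈ Finset.Icc 1 n, k * t k * z ^ (k - 1)))).re) :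
    ∃ L : ℂ →L[ℝ] ℝ, HasFDerivAt E L z ∧ ∀ v, L v = (2 / t₀) * (v * ((starRingEnd ℂ) z - c)).re := by
  obtain ⟨LV, h1, h2⟩ := V_deriv hV z
  have h3 := h1.add ((hU.const_sub (∫ ζ in Dp, Real.log ‖0 - ζ‖)).const_mul (2 / (Real.pi * t₀)))
  refine ⟨_, h3.congr_of_eventuallyEq (Eventually.of_forall fun z => ?_), fun v => ?_⟩
  · simp only [hE, L_eq hDpb, Pi.add_apply]
  · simp only [_root_.smul_apply, _root_.add_apply, _root_.neg_apply, smul_eq_mul, h2, hLU]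
    set P := ∑ k ∈ Finset.Icc 1 n, k * t k * z ^ (k - 1)
    rw [show v * ((Real.pi : ℂ) * (c - P)) = Real.pi * (v * (c - P)) by ring, re_ofReal_mul]
    have hpi := Real.pi_pos
    simp only [mul_sub, sub_re]
    field_simp
    ring

theorem stmt_16 (d : ℕ) (r R t₀ : ℝ) (hr : 0 < r) (ht₀ : 0 < t₀)
    (a : Fin (d + 1) → ℂ)
    (h : ℂ → ℂ)
    (hh : h = fun w : ℂ => (r : ℂ) * w + ∑ j : Fin (d + 1), a j * w ^ (-(j : ℤ)))
    (hinj : Set.InjOn h (Metric.sphere (0 : ℂ) 1))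
    (hderiv : ∀ w : ℂ, 1 ≤ ‖w‖ → deriv h w ≠ 0)
    (hne : ∀ w : ℂ, 1 ≤ ‖w‖ → h w ≠ 0)
    (hR0 : 0 ≤ R) (hR1 : R < 1)
    (hRcrit : ∀ w : ℂ, w ≠ 0 → deriv h w = 0 → ‖w‖ ≤ R)
    (Dp : Set ℂ) (hDpo : IsOpen Dp) (hDpb : Bornology.IsBounded Dp)
    (h0 : (0 : ℂ) ∈ Dp) (hfr : frontier Dp = h '' Metric.sphere (0 : ℂ) 1)
    (t : ℕ → ℂ)
    (ht : ∀ k ∈ Finset.Icc 1 (d + 1), t k = (2 * Real.pi * I * k)⁻¹ *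
      ∮ w in C(0, 1), (starRingEnd ℂ) (h w) * (h w) ^ (-(k : ℤ)) * deriv h w)
    (harea : ((Real.pi * t₀ : ℝ) : ℂ) =
      (2 * I)⁻¹ * ∮ w in C(0, 1), (starRingEnd ℂ) (h w) * deriv h w)
    (V : ℂ → ℝ)
    (hV : ∀ z : ℂ, V z = (1 / t₀) *
      (‖z‖ ^ 2 - 2 * (∑ k ∈ Finset.Icc 1 (d + 1), t k * z ^ k).re))
    (E : ℂ → ℝ)
    (hE : ∀ z : ℂ, E z = V z +
      (2 / (Real.pi * t₀)) * ∫ ζ in Dp, Real.log ‖z / ζ - 1‖⁻¹) :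
    (∀ z ∈ Dp, E z = 0) ∧
    (∀ w : ℂ, 1 < ‖w‖ → ‖w‖ < R⁻¹ →
      (1 / 2 : ℂ) * (((fderiv ℝ E (h w)) 1 : ℝ) + I * ((fderiv ℝ E (h w)) I : ℝ)) =
        (h w - h (((starRingEnd ℂ) w)⁻¹)) / (t₀ : ℂ)) := by
  have hh' : h = hf d r a := by rw [hh]; rfl
  clear hh
  subst hh'
  have hderiv' : ∀ w ∈ extc, deriv (hf d r a) w ≠ 0 := fun w hw => hderiv w hw
  have hne' : ∀ w ∈ extc, hf d r a w ≠ 0 := fun w hw => hne w hw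
  have hs : ∀ w ∈ extc, HasStrictDerivAt (hf d r a) (deriv (hf d r a) w) w :=
    fun w hw => hf_strict d r a w (extc_ne hw)
  have hp := hf_proper d r a hr
  obtain ⟨hDeq, hDconn, hinjc⟩ := aux_top hs (fun w hw => (hf_diff d r a w hw).continuousAt) hderiv' hp
    hinj hne' hDpo hDpb h0 hfr
  have hOo : IsOpen (hf d r a '' exto) := aux_open_image hs hderiv'
  have hsph : ∀ w ∈ Metric.sphere (0:ℂ) 1, w ∈ extc := by
    intro w hw
    have : ‖w‖ = 1 := by simpa using hw
    exact show 1 ≤ ‖w‖ from this.ge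
  have hnotD : ∀ w ∈ extc, hf d r a w ∉ Dp := by
    intro w hw hD
    rw [hDeq] at hD
    exact hD ⟨w, hw, rfl⟩
  constructor
  · have hder : ∀ z ∈ Dp, HasFDerivAt E (0 : ℂ →L[ℝ] ℝ) z := by
      intro z hz
      obtain ⟨δ, hδ, hball⟩ := Metric.isOpen_iff.mp hDpo z hz
      obtain ⟨F, hFc, hFeq, LU, hLU, hLUv⟩ := pot_deriv hDpo hDpb (z₀ := z) (c := (starRingEnd ℂ) z)
        (ε := δ / 2) (by positivity) (Or.inl ⟨by rwa [mul_div_cancel₀ δ two_ne_zero], rfl⟩)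
      have hinteg : ∫ ζ in Dp, dbar F ζ = Real.pi * ((starRingEnd ℂ) z -
          ∑ k ∈ Finset.Icc 1 (d + 1), k * t k * z ^ (k - 1)) := by
        rw [green_D (hf_diff d r a) hp hinjc hOo hDpo hDpb hfr hDeq hFc,
          ← circ_interior hr hne' ht (z := z) (fun w hw e => hnotD w hw (e ▸ hz))]
        congr 1
        apply circleIntegral.integral_congr zero_le_one
        intro w hw
        simp only
        rw [hFeq]
        have h1 : hf d r a w ∉ Metric.ball z δ := fun hb => hnotD w (hsph w hw) (hball hb)
        rw [Metric.mem_ball, not_lt, dist_comm, dist_eq_norm] at h1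
        linarith
      obtain ⟨L, hL, hLv⟩ := E_deriv ht₀ hDpb hV hE hLU (fun v => by rw [hLUv, hinteg])
      have : L = 0 := by
        ext <;> simp [hLv]
      rwa [this] at hL
    have hE0 : E 0 = 0 := by
      rw [hE, hV]
      have : ∑ k ∈ Finset.Icc 1 (d + 1), t k * (0:ℂ) ^ k = 0 := by
        apply Finset.sum_eq_zero
        intro k hk
        rw [Finset.mem_Icc] at hk
        rw [zero_pow (by omega), mul_zero]
      simp [this]
    intro z hz
    rw [← hE0]
    exact hDpo.is_const_of_fderiv_eq_zero hDconn
      (fun x hx => (hder x hx).differentiableAt.differentiableWithinAt)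
      (fun x hx => (hder x hx).fderiv) hz h0
  · intro w hw _
    obtain ⟨δ, hδ, hball⟩ := Metric.isOpen_iff.mp hOo (hf d r a w) ⟨w, hw, rfl⟩
    have hdis : Disjoint (Metric.ball (hf d r a w) δ) Dp := by
      rw [Set.disjoint_left]
      intro x hx hxD
      obtain ⟨y, hy, rfl⟩ := hball hx
      exact hnotD y (show 1 ≤ ‖y‖ from le_of_lt hy) hxD
    obtain ⟨F, hFc, hFeq, LU, hLU, hLUv⟩ := pot_deriv hDpo hDpb (z₀ := hf d r a w) (c := 0)
        (ε := δ / 2) (by positivity) (Or.inr (by rwa [mul_div_cancel₀ δ two_ne_zero]))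
    have hinteg : ∫ ζ in Dp, dbar F ζ = Real.pi * (kf d r a w -
          ∑ k ∈ Finset.Icc 1 (d + 1), k * t k * (hf d r a w) ^ (k - 1)) := by
      rw [green_D (hf_diff d r a) hp hinjc hOo hDpo hDpb hfr hDeq hFc,
        ← circ_exterior hr hne' ht hinjc hderiv' hw]
      congr 1
      apply circleIntegral.integral_congr zero_le_one
      intro x hx
      simp only
      rw [hFeq]
      have h1 : hf d r a x ∉ Metric.ball (hf d r a w) δ := by
        have h2 : hf d r a x ∈ closure Dp := by
          apply frontier_subset_closure
          rw [hfr]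
          exact ⟨x, hx, rfl⟩
        exact fun hb => Set.disjoint_left.mp (hdis.closure_right Metric.isOpen_ball) hb h2
      rw [Metric.mem_ball, not_lt, dist_comm, dist_eq_norm] at h1
      linarith
    obtain ⟨L, hL, hLv⟩ := E_deriv ht₀ hDpb hV hE hLU (fun v => by rw [hLUv, hinteg])
    rw [hL.fderiv, hLv, hLv, ← kf_conj]
    have ht0c : (t₀ : ℂ) ≠ 0 := by exact_mod_cast ht₀.ne'
    have hgen : ∀ X : ℂ, (((2 / t₀ * (1 * X).re : ℝ) : ℂ) + I * ((2 / t₀ * (I * X).re : ℝ) : ℂ)) =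
        2 / t₀ * (starRingEnd ℂ) X := by
      intro X
      apply Complex.ext <;> simp [← ofReal_ofNat, ← ofReal_div]
    rw [hgen]
    simp only [map_sub, Complex.conj_conj]
    field_simp
end
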